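/- arXiv:1604.01762 — 12 statements merged into one kernel-verified Lean document; each statement's English description precedes it below -/
import Mathlib

section
/- Let v₁, v₂, ..., v₅ ∈ ℝ³ be 3-independent (every three of them linearly independent). Let F : ℝ³ → ℝ³ be an injective mapping that maps each line in ℒ(v₁, ..., v₅) onto a line. Then F is affine-additive. Moreover, there exist a basis u₁, u₂, u₃ of ℝ³, a basis w₁, w₂, w₃ of ℝ³, and additive bijections f₁, f₂, f₃ : ℝ → ℝ with fᵢ(1) = 1, such that for every x = Σᵢ αᵢuᵢ one has F(x) − F(0) = Σᵢ fᵢ(αᵢ)wᵢ. -/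
/-- The line through `a` in direction `b`. -/
def lineThru {k : ℕ} (a b : Fin k → ℝ) : Set (Fin k → ℝ) :=
  {x | ∃ t : ℝ, x = a + t • b}

/-- A subset of `ℝᵏ` is a line if it is of the form `a + ℝ b` with `b ≠ 0`. -/
def IsLine {k : ℕ} (s : Set (Fin k → ℝ)) : Prop :=
  ∃ a b : Fin k → ℝ, b ≠ 0 ∧ s = lineThru a b

/-- Normalised parametrisation of the image of a line. -/
structure NormBij (f : ℝ → ℝ) : Prop where
  bij : Function.Bijective f
  zero : f 0 = 0
  one : f 1 = 1

abbrev V3 := Fin 3 → ℝ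

theorem line_param (F : V3 → V3) (hinj : Function.Injective F) (b : V3) (hb : b ≠ 0)
    (hF : ∀ a, IsLine (F '' lineThru a b)) (a : V3) :
    ∃ f, NormBij f ∧ ∀ t : ℝ, F (a + t • b) = F a + f t • (F (a + b) - F a) := by
  obtain ⟨c, d, hd, h⟩ := hF a
  have h1 : ∀ t : ℝ, ∃ s : ℝ, F (a + t • b) = c + s • d := by
    intro t
    have : F (a + t • b) ∈ lineThru c d := by
      rw [← h]; exact ⟨_, ⟨t, rfl⟩, rfl⟩
    exact this
  have h2 : ∀ s : ℝ, ∃ t : ℝ, F (a + t • b) = c + s • d := by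
    intro s
    have : c + s • d ∈ F '' lineThru a b := by
      rw [h]; exact ⟨s, rfl⟩
    obtain ⟨x, ⟨t, rfl⟩, hx⟩ := this
    exact ⟨t, hx⟩
  choose g hg using h1
  have ginj : Function.Injective g := by
    intro s t hst
    have : F (a + s • b) = F (a + t • b) := by rw [hg, hg, hst]
    have := add_left_cancel (hinj this)
    exact smul_left_injective ℝ hb this
  have gsurj : Function.Surjective g := by
    intro s
    obtain ⟨t, ht⟩ := h2 s
    rw [hg] at ht
    exact ⟨t, smul_left_injective ℝ hd (add_left_cancel ht)⟩
  have hk : g 1 - g 0 ≠ 0 := by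
    intro h
    have := ginj (sub_eq_zero.1 h)
    norm_num at this
  have e0 : F a = c + g 0 • d := by simpa using hg 0
  have e1 : F (a + b) = c + g 1 • d := by simpa using hg 1
  refine ⟨fun t => (g t - g 0) / (g 1 - g 0), ⟨⟨?_, ?_⟩, by simp, by simp [hk]⟩, ?_⟩
  · intro s t hst
    simp only at hst
    rw [div_left_inj' hk] at hst
    exact ginj (by linarith)
  · intro s
    obtain ⟨t, ht⟩ := gsurj (s * (g 1 - g 0) + g 0)
    refine ⟨t, ?_⟩
    simp only [ht]
    field_simp
    ring
  · intro t
    rw [e0, e1, hg]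
    have : (c + g 1 • d) - (c + g 0 • d) = (g 1 - g 0) • d := by module
    rw [this, smul_smul, div_mul_cancel₀ _ hk]
    module

theorem grid (G : ℝ → ℝ → V3)
    (hinj : ∀ x y x' y', G x y = G x' y' → x = x' ∧ y = y')
    (hx : ∀ y, ∃ f, NormBij f ∧ ∀ x, G x y = G 0 y + f x • (G 1 y - G 0 y))
    (hy : ∀ x, ∃ f, NormBij f ∧ ∀ y, G x y = G x 0 + f y • (G x 1 - G x 0))
    (f : ℝ → ℝ) (hf : NormBij f) (hf0 : ∀ x, G x 0 = G 0 0 + f x • (G 1 0 - G 0 0)) :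
    ∀ x y, G x y = G 0 y + f x • (G 1 y - G 0 y) := by
  obtain ⟨β, hβ, hβ'⟩ := hx 1
  choose γ hγ hγ' using hy
  set p := G 0 0 with hp
  set d0 := G 1 0 - p with hd0
  set e := G 0 1 - p with he
  set d1 := G 1 1 - G 0 1 with hd1
  have hG01 : G 0 1 = p + e := by rw [he]; abel
  have key : ∀ x y, G x y = p + f x • d0 + γ x y • (e + β x • d1 - f x • d0) := by
    intro x y
    rw [hγ' x y, hβ' x, hf0 x, hG01]
    module
  have hnot : e ∉ Submodule.span ℝ {d0, d1} := by
    intro hmem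
    obtain ⟨a, b, hab⟩ := Submodule.mem_span_pair.1 hmem
    obtain ⟨x, hx1⟩ := hf.bij.2 a
    obtain ⟨x', hx2⟩ := hβ.bij.2 (-b)
    have : G x 0 = G x' 1 := by
      rw [hf0 x, hβ' x', hG01, hx1, hx2, ← hab]
      module
    have := (hinj _ _ _ _ this).2
    norm_num at this
  obtain ⟨l, hl, hle⟩ := Submodule.exists_le_ker_of_notMem hnot
  have hl0 : l d0 = 0 := hle (Submodule.subset_span (by simp))
  have hl1 : l d1 = 0 := hle (Submodule.subset_span (by simp))
  have hlG : ∀ x y, l (G x y) = l p + γ x y * l e := by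
    intro x y
    rw [key]; simp [hl0, hl1]
  have hconst : ∀ x y, γ x y = γ 0 y := by
    intro x y
    by_cases hy0 : y = 0
    · subst hy0; rw [(hγ x).zero, (hγ 0).zero]
    obtain ⟨η, hη, hη'⟩ := hx y
    have hrow : ∀ x, γ x y = γ 0 y + η x * (γ 1 y - γ 0 y) := by
      intro x
      have := congrArg l (hη' x)
      rw [map_add, map_smul, map_sub, hlG x y, hlG 1 y, hlG 0 y, smul_eq_mul] at this
      apply mul_right_cancel₀ hl
      linarith
    by_cases h10 : γ 1 y - γ 0 y = 0
    · rw [hrow x, h10]; ring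
    exfalso
    obtain ⟨x', hx'⟩ := hη.bij.2 (-γ 0 y / (γ 1 y - γ 0 y))
    have h0 : γ x' y = 0 := by
      rw [hrow x', hx']; field_simp; ring
    have : G x' y = G x' 0 := by rw [hγ' x' y, h0]; simp
    exact hy0 (hinj _ _ _ _ this).2
  set g := γ 0 with hg
  have hgb : NormBij g := hγ 0
  have key2 : ∀ x y, G x y = p + f x • d0 + g y • (e + β x • d1 - f x • d0) := by
    intro x y; rw [key, hconst]
  have hd0ne : d0 ≠ 0 := by
    intro h
    have : G 1 0 = G 0 0 := sub_eq_zero.1 h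
    have := (hinj _ _ _ _ this).1
    norm_num at this
  have claim : ∀ x, β x • d1 = f x • d1 := by
    by_cases hdep : ∃ κ : ℝ, d1 = κ • d0
    · obtain ⟨κ, hκ⟩ := hdep
      have hκf : ∀ x, κ * β x = f x := by
        intro x
        by_contra hne
        have hne' : κ * β x - f x ≠ 0 := sub_ne_zero.2 hne
        obtain ⟨y, hy⟩ := hgb.bij.2 (-f x / (κ * β x - f x))
        have : G x y = G 0 y := by
          rw [key2, key2, hf.zero, hβ.zero, hκ]
          have h3 : f x + g y * (κ * β x - f x) = 0 := by
            rw [hy]; field_simp; ring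
          have : p + f x • d0 + g y • (e + β x • κ • d0 - f x • d0)
            = p + g y • e + (f x + g y * (κ * β x - f x)) • d0 := by module
          rw [this, h3]; module
        have hx0 := (hinj _ _ _ _ this).1
        subst hx0
        rw [hβ.zero, hf.zero] at hne
        simp at hne
      have hκ1 : κ = 1 := by
        have := hκf 1
        rwa [hβ.one, hf.one, mul_one] at this
      intro x
      rw [← hκf x, hκ1, one_mul]
    · intro x
      obtain ⟨y, hy⟩ := hgb.bij.2 2
      obtain ⟨η, hη, hη'⟩ := hx y
      have h := hη' x
      rw [key2, key2 0, key2 1, hy, hf.zero, hβ.zero, hf.one, hβ.one] at h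
      have h2 : (2 * (β x - η x)) • d1 = (f x - η x) • d0 := by
        rw [← sub_eq_zero] at h ⊢
        rw [← h]
        module
      have h3 : 2 * (β x - η x) = 0 := by
        by_contra hne
        apply hdep
        refine ⟨(2 * (β x - η x))⁻¹ * (f x - η x), ?_⟩
        rw [mul_smul, ← h2, smul_smul, inv_mul_cancel₀ hne, one_smul]
      rw [h3, zero_smul] at h2
      have h4 := (smul_eq_zero.1 h2.symm).resolve_right hd0ne
      have : β x = f x := by linarith
      rw [this]
  intro x y
  rw [key2 x, key2 0, key2 1, claim, claim, claim, hf.zero, hf.one]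
  module

/-- Along a direction all lines are parametrised by the same additive bijection. -/
theorem uniform (F : V3 → V3) (hinj : Function.Injective F) (b b1 b2 b3 : V3)
    (hF : ∀ a, IsLine (F '' lineThru a b))
    (hF1 : ∀ a, IsLine (F '' lineThru a b1))
    (hF2 : ∀ a, IsLine (F '' lineThru a b2))
    (hF3 : ∀ a, IsLine (F '' lineThru a b3))
    (hi1 : ∀ x y : ℝ, x • b + y • b1 = 0 → x = 0 ∧ y = 0)
    (hi2 : ∀ x y : ℝ, x • b + y • b2 = 0 → x = 0 ∧ y = 0)
    (hi3 : ∀ x y : ℝ, x • b + y • b3 = 0 → x = 0 ∧ y = 0)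
    (hs : ∀ a : V3, ∃ x y z : ℝ, a = x • b1 + y • b2 + z • b3) :
    ∃ f, NormBij f ∧ (∀ s t, f (s + t) = f s + f t) ∧
      ∀ a (t : ℝ), F (a + t • b) = F a + f t • (F (a + b) - F a) := by
  have hb : b ≠ 0 := by
    rintro rfl
    have := (hi1 1 0 (by simp)).1
    norm_num at this
  have step : ∀ c : V3, (∀ a, IsLine (F '' lineThru a c)) →
      (∀ x y : ℝ, x • b + y • c = 0 → x = 0 ∧ y = 0) →
      ∀ f, NormBij f → ∀ a, (∀ t : ℝ, F (a + t • b) = F a + f t • (F (a + b) - F a)) →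
      ∀ s : ℝ, ∀ t : ℝ, F (a + s • c + t • b) =
        F (a + s • c) + f t • (F (a + s • c + b) - F (a + s • c)) := by
    intro c hc hi f hf a ha s t
    have hc0 : c ≠ 0 := by
      rintro rfl
      have := (hi 0 1 (by simp)).2
      norm_num at this
    have := grid (fun x y => F (a + y • c + x • b)) ?_ ?_ ?_ f hf ?_ t s
    · simpa using this
    · intro x y x' y' h
      have h := hinj h
      have := hi (x - x') (y - y') (by
        rw [← sub_eq_zero] at h
        rw [← h]; module)
      exact ⟨sub_eq_zero.1 this.1, sub_eq_zero.1 this.2⟩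
    · intro y
      obtain ⟨g, hg, hg'⟩ := line_param F hinj b hb hF (a + y • c)
      exact ⟨g, hg, fun x => by simpa using hg' x⟩
    · intro x
      obtain ⟨g, hg, hg'⟩ := line_param F hinj c hc0 hc (a + x • b)
      refine ⟨g, hg, fun y => ?_⟩
      have := hg' y
      simp only [one_smul, zero_smul, add_zero]
      rw [add_right_comm a (y • c), add_right_comm a c]
      exact this
    · intro x
      simpa using ha x
  obtain ⟨f, hf, hf0⟩ := line_param F hinj b hb hF 0
  have huni : ∀ a (t : ℝ), F (a + t • b) = F a + f t • (F (a + b) - F a) := by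
    intro a
    obtain ⟨x, y, z, rfl⟩ := hs a
    have h1 := step b1 hF1 hi1 f hf 0 hf0 x
    have h2 := step b2 hF2 hi2 f hf _ h1 y
    have h3 := step b3 hF3 hi3 f hf _ h2 z
    simpa only [zero_add] using h3
  refine ⟨f, hf, ?_, huni⟩
  have hd : F b - F 0 ≠ 0 := by
    intro h
    exact hb (hinj (sub_eq_zero.1 h))
  have h0 : ∀ t : ℝ, F (t • b) = F 0 + f t • (F b - F 0) := by
    intro t; simpa using huni 0 t
  have hadd : ∀ s t, f (s + t) = f s + f t * (f (s + 1) - f s) := by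
    intro s t
    have h := huni (s • b) t
    have e1 : s • b + t • b = (s + t) • b := by module
    have e2 : s • b + b = (s + 1) • b := by module
    rw [e1, e2, h0, h0, h0] at h
    have : (f (s + t)) • (F b - F 0) = (f s + f t * (f (s + 1) - f s)) • (F b - F 0) := by
      linear_combination (norm := module) h
    exact smul_left_injective ℝ hd this
  have hψ : ∀ s, f (s + 1) - f s ≠ 0 := by
    intro s h
    have := hf.bij.1 (sub_eq_zero.1 h)
    linarith
  have hk : ∀ t, f (t + 1) - f t = 1 + f t * (f (1 + 1) - f 1 - 1) := by
    intro t
    have h1 := hadd 1 t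
    rw [add_comm 1 t] at h1
    rw [hf.one] at h1 ⊢
    linarith
  have hk0 : f (1 + 1) - f 1 - 1 = 0 := by
    by_contra hne
    obtain ⟨t, ht⟩ := hf.bij.2 (-1 / (f (1 + 1) - f 1 - 1))
    apply hψ t
    rw [hk, ht, div_mul_cancel₀ _ hne]; norm_num
  intro s t
  rw [hadd, hk, hk0]; ring

theorem core (F : V3 → V3) (hinj : Function.Injective F) (e1 e2 e3 : V3) (p q r : ℝ)
    (hi : ∀ x y z : ℝ, x • e1 + y • e2 + z • e3 = 0 → x = 0 ∧ y = 0 ∧ z = 0)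
    (hs : ∀ a : V3, ∃ x y z : ℝ, a = x • e1 + y • e2 + z • e3)
    (hp : p ≠ 0) (hq : q ≠ 0) (hr : r ≠ 0) (hpq : p ≠ q) (hpr : p ≠ r) (hqr : q ≠ r)
    (h1 : ∀ a, IsLine (F '' lineThru a e1))
    (h2 : ∀ a, IsLine (F '' lineThru a e2))
    (h3 : ∀ a, IsLine (F '' lineThru a e3))
    (h4 : ∀ a, IsLine (F '' lineThru a (e1 + e2 + e3)))
    (h5 : ∀ a, IsLine (F '' lineThru a (p • e1 + q • e2 + r • e3))) :
    ∃ (u1 u2 u3 : V3) (f : ℝ → ℝ), NormBij f ∧ (∀ s t, f (s + t) = f s + f t) ∧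
      (∀ x y z : ℝ, x • u1 + y • u2 + z • u3 = 0 → x = 0 ∧ y = 0 ∧ z = 0) ∧
      ∀ x y z : ℝ, F (x • e1 + y • e2 + z • e3) = F 0 + f x • u1 + f y • u2 + f z • u3 := by
  -- pairwise independence helper
  have hi' : ∀ a1 a2 a3 b1 b2 b3 x y : ℝ,
      x • (a1 • e1 + a2 • e2 + a3 • e3) + y • (b1 • e1 + b2 • e2 + b3 • e3) = 0 →
      x * a1 + y * b1 = 0 ∧ x * a2 + y * b2 = 0 ∧ x * a3 + y * b3 = 0 := by
    intro a1 a2 a3 b1 b2 b3 x y h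
    apply hi
    rw [← h]; module
  have E1 : e1 = (1:ℝ) • e1 + (0:ℝ) • e2 + (0:ℝ) • e3 := by module
  have E2 : e2 = (0:ℝ) • e1 + (1:ℝ) • e2 + (0:ℝ) • e3 := by module
  have E3 : e3 = (0:ℝ) • e1 + (0:ℝ) • e2 + (1:ℝ) • e3 := by module
  have E4 : e1 + e2 + e3 = (1:ℝ) • e1 + (1:ℝ) • e2 + (1:ℝ) • e3 := by module
  have i12 : ∀ x y : ℝ, x • e1 + y • e2 = 0 → x = 0 ∧ y = 0 := by
    intro x y h
    have := hi x y 0 (by rw [← h]; module)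
    tauto
  have i13 : ∀ x y : ℝ, x • e1 + y • e3 = 0 → x = 0 ∧ y = 0 := by
    intro x y h
    have := hi x 0 y (by rw [← h]; module)
    tauto
  have i23 : ∀ x y : ℝ, x • e2 + y • e3 = 0 → x = 0 ∧ y = 0 := by
    intro x y h
    have := hi 0 x y (by rw [← h]; module)
    tauto
  have i4 : ∀ x y : ℝ, (x • e1 + y • (e1 + e2 + e3) = 0 → x = 0 ∧ y = 0) ∧
      (x • e2 + y • (e1 + e2 + e3) = 0 → x = 0 ∧ y = 0) ∧
      (x • e3 + y • (e1 + e2 + e3) = 0 → x = 0 ∧ y = 0) := by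
    intro x y
    refine ⟨fun h => ?_, fun h => ?_, fun h => ?_⟩
    · have := hi (x + y) y y (by rw [← h]; module)
      constructor <;> linarith [this.1, this.2.1]
    · have := hi y (x + y) y (by rw [← h]; module)
      constructor <;> linarith [this.1, this.2.1]
    · have := hi y y (x + y) (by rw [← h]; module)
      constructor <;> linarith [this.1, this.2.2]
  have i5 : ∀ x y : ℝ, (x • (p • e1 + q • e2 + r • e3) + y • e1 = 0 → x = 0 ∧ y = 0) ∧
      (x • (p • e1 + q • e2 + r • e3) + y • e2 = 0 → x = 0 ∧ y = 0) ∧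
      (x • (p • e1 + q • e2 + r • e3) + y • e3 = 0 → x = 0 ∧ y = 0) := by
    intro x y
    refine ⟨fun h => ?_, fun h => ?_, fun h => ?_⟩
    · have := hi (x * p + y) (x * q) (x * r) (by rw [← h]; module)
      have hx : x = 0 := (mul_eq_zero.1 this.2.1).resolve_right hq
      refine ⟨hx, ?_⟩
      have := this.1
      rw [hx] at this; linarith
    · have := hi (x * p) (x * q + y) (x * r) (by rw [← h]; module)
      have hx : x = 0 := (mul_eq_zero.1 this.1).resolve_right hp
      refine ⟨hx, ?_⟩
      have := this.2.1
      rw [hx] at this; linarith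
    · have := hi (x * p) (x * q) (x * r + y) (by rw [← h]; module)
      have hx : x = 0 := (mul_eq_zero.1 this.1).resolve_right hp
      refine ⟨hx, ?_⟩
      have := this.2.2
      rw [hx] at this; linarith
  obtain ⟨f1, hf1, ha1, hF1⟩ := uniform F hinj e1 e2 e3 (e1 + e2 + e3) h1 h2 h3 h4 i12 i13
    (fun x y => (i4 x y).1) (by
      intro a
      obtain ⟨x, y, z, rfl⟩ := hs a
      exact ⟨y - x, z - x, x, by module⟩)
  obtain ⟨f2, hf2, ha2, hF2⟩ := uniform F hinj e2 e1 e3 (e1 + e2 + e3) h2 h1 h3 h4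
    (fun x y h => (i12 y x (by rw [← h]; module)).symm) i23
    (fun x y => (i4 x y).2.1) (by
      intro a
      obtain ⟨x, y, z, rfl⟩ := hs a
      exact ⟨x - y, z - y, y, by module⟩)
  obtain ⟨f3, hf3, ha3, hF3⟩ := uniform F hinj e3 e1 e2 (e1 + e2 + e3) h3 h1 h2 h4
    (fun x y h => (i13 y x (by rw [← h]; module)).symm)
    (fun x y h => (i23 y x (by rw [← h]; module)).symm)
    (fun x y => (i4 x y).2.2) (by
      intro a
      obtain ⟨x, y, z, rfl⟩ := hs a
      exact ⟨x - z, y - z, z, by module⟩)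
  obtain ⟨f4, hf4, ha4, hF4⟩ := uniform F hinj (e1 + e2 + e3) e1 e2 e3 h4 h1 h2 h3
    (fun x y h => ((i4 y x).1 (by rw [← h]; module)).symm)
    (fun x y h => ((i4 y x).2.1 (by rw [← h]; module)).symm)
    (fun x y h => ((i4 y x).2.2 (by rw [← h]; module)).symm) hs
  obtain ⟨f5, hf5, ha5, hF5⟩ := uniform F hinj (p • e1 + q • e2 + r • e3) e1 e2 e3 h5 h1 h2 h3
    (fun x y => (i5 x y).1) (fun x y => (i5 x y).2.1) (fun x y => (i5 x y).2.2) hs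
  have odd : ∀ f : ℝ → ℝ, NormBij f → (∀ s t, f (s + t) = f s + f t) → ∀ t, f (-t) = -f t := by
    intro f hf ha t
    have := ha t (-t)
    rw [add_neg_cancel, hf.zero] at this
    linarith
  have two : ∀ f : ℝ → ℝ, NormBij f → (∀ s t, f (s + t) = f s + f t) → f 2 = 2 := by
    intro f hf ha
    have := ha 1 1
    rw [hf.one] at this
    norm_num at this; exact this
  -- the trilinear form
  obtain ⟨u1, u2, u3, u12, u13, u23, u, hexp⟩ : ∃ u1 u2 u3 u12 u13 u23 u : V3, ∀ x y z : ℝ,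
      F (x • e1 + y • e2 + z • e3) = F 0 + f1 x • u1 + f2 y • u2 + f3 z • u3
        + (f1 x * f2 y) • u12 + (f1 x * f3 z) • u13 + (f2 y * f3 z) • u23
        + (f1 x * f2 y * f3 z) • u := by
    refine ⟨F e1 - F 0, F e2 - F 0, F e3 - F 0, F (e1 + e2) - F e1 - F e2 + F 0,
      F (e1 + e3) - F e1 - F e3 + F 0, F (e2 + e3) - F e2 - F e3 + F 0,
      F (e1 + e2 + e3) - F (e1 + e2) - F (e1 + e3) - F (e2 + e3) + F e1 + F e2 + F e3 - F 0, ?_⟩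
    intro x y z
    have c1 : F (x • e1) = F 0 + f1 x • (F e1 - F 0) := by simpa using hF1 0 x
    have c2 : F (x • e1 + e2) = F e2 + f1 x • (F (e1 + e2) - F e2) := by
      have := hF1 e2 x
      rwa [add_comm e2, add_comm e2] at this
    have c3 : F (x • e1 + e3) = F e3 + f1 x • (F (e1 + e3) - F e3) := by
      have := hF1 e3 x
      rwa [add_comm e3, add_comm e3] at this
    have c4 : F (x • e1 + e2 + e3) = F (e2 + e3) + f1 x • (F (e1 + e2 + e3) - F (e2 + e3)) := by
      have := hF1 (e2 + e3) x
      rwa [add_comm (e2 + e3), add_comm (e2 + e3), ← add_assoc, ← add_assoc] at this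
    have d1 := hF2 (x • e1) y
    have d2 := hF2 (x • e1 + e3) y
    rw [add_right_comm, add_right_comm _ _ e2] at d2
    have d3 := hF3 (x • e1 + y • e2) z
    rw [d3, d2, d1, c4, c3, c2, c1]
    module
  -- consequences of direction 4
  have hG4 : ∀ t : ℝ, f1 t • u1 + f2 t • u2 + f3 t • u3
        + (f1 t * f2 t) • u12 + (f1 t * f3 t) • u13 + (f2 t * f3 t) • u23
        + (f1 t * f2 t * f3 t) • u = f4 t • (u1 + u2 + u3 + u12 + u13 + u23 + u) := by
    intro t
    have h := hF4 0 t
    have e : (0 : V3) + t • (e1 + e2 + e3) = t • e1 + t • e2 + t • e3 := by module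
    rw [e, zero_add, E4, hexp, hexp, hf1.one, hf2.one, hf3.one] at h
    rw [← sub_eq_zero] at h ⊢
    rw [← h]; module
  have hm := hG4 (-1)
  have h22 := hG4 2
  rw [odd f1 hf1 ha1, odd f2 hf2 ha2, odd f3 hf3 ha3, odd f4 hf4 ha4, hf1.one, hf2.one,
    hf3.one, hf4.one] at hm
  rw [two f1 hf1 ha1, two f2 hf2 ha2, two f3 hf3 ha3, two f4 hf4 ha4] at h22
  have hE : u12 + u13 + u23 = 0 := by
    have : (2:ℝ) • (u12 + u13 + u23) = 0 := by
      rw [← sub_eq_zero] at hm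
      rw [← hm]; module
    exact (smul_eq_zero.1 this).resolve_left (by norm_num)
  have hu : u = 0 := by
    have : (6:ℝ) • u = 0 := by
      have e : (6:ℝ) • u = ((2:ℝ) • u1 + (2:ℝ) • u2 + (2:ℝ) • u3
        + ((2:ℝ) * 2) • u12 + ((2:ℝ) * 2) • u13 + ((2:ℝ) * 2) • u23
        + ((2:ℝ) * 2 * 2) • u) - (2:ℝ) • (u1 + u2 + u3 + u12 + u13 + u23 + u)
        - (2:ℝ) • (u12 + u13 + u23) := by module
      rw [e, h22, hE]; simp
    exact (smul_eq_zero.1 this).resolve_left (by norm_num)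
  subst hu
  have hlin4 : ∀ t, f1 t • u1 + f2 t • u2 + f3 t • u3 = f4 t • (u1 + u2 + u3) := by
    intro t
    have ha := hG4 t
    have hb := hG4 (-t)
    rw [odd f1 hf1 ha1, odd f2 hf2 ha2, odd f3 hf3 ha3, odd f4 hf4 ha4] at hb
    have e4 : u1 + u2 + u3 + u12 + u13 + u23 + 0 = u1 + u2 + u3 := by
      have : u1 + u2 + u3 + u12 + u13 + u23 + 0 = u1 + u2 + u3 + (u12 + u13 + u23) := by module
      rw [this, hE, add_zero]
    rw [e4] at ha hb
    rw [← sub_eq_zero] at ha hb ⊢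
    have : (2:ℝ) • (f1 t • u1 + f2 t • u2 + f3 t • u3 - f4 t • (u1 + u2 + u3)) = 0 := by
      linear_combination (norm := module) ha - hb
    exact (smul_eq_zero.1 this).resolve_left (by norm_num)
  -- the map in transformed coordinates is injective
  have hGinj : ∀ X Y Z X' Y' Z' : ℝ,
      X • u1 + Y • u2 + Z • u3 + (X * Y) • u12 + (X * Z) • u13 + (Y * Z) • u23 =
      X' • u1 + Y' • u2 + Z' • u3 + (X' * Y') • u12 + (X' * Z') • u13 + (Y' * Z') • u23 →
      X = X' ∧ Y = Y' ∧ Z = Z' := by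
    intro X Y Z X' Y' Z' h
    obtain ⟨x, rfl⟩ := hf1.bij.2 X
    obtain ⟨y, rfl⟩ := hf2.bij.2 Y
    obtain ⟨z, rfl⟩ := hf3.bij.2 Z
    obtain ⟨x', rfl⟩ := hf1.bij.2 X'
    obtain ⟨y', rfl⟩ := hf2.bij.2 Y'
    obtain ⟨z', rfl⟩ := hf3.bij.2 Z'
    have : F (x • e1 + y • e2 + z • e3) = F (x' • e1 + y' • e2 + z' • e3) := by
      rw [hexp, hexp]
      linear_combination (norm := module) h
    have := hinj this
    have := hi (x - x') (y - y') (z - z') (by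
      rw [← sub_eq_zero] at this
      rw [← this]; module)
    rw [sub_eq_zero.1 this.1, sub_eq_zero.1 this.2.1, sub_eq_zero.1 this.2.2]
    exact ⟨rfl, rfl, rfl⟩
  have hU : ∀ x y z : ℝ, x • u1 + y • u2 + z • u3 = 0 → x = 0 ∧ y = 0 ∧ z = 0 := by
    intro x y z h
    have := hGinj x y z (-x) (-y) (-z) (by
      rw [← sub_eq_zero]
      have e : (2:ℝ) • (x • u1 + y • u2 + z • u3) = 0 := by rw [h, smul_zero]
      rw [← e]; module)
    refine ⟨?_, ?_, ?_⟩ <;> linarith [this.1, this.2.1, this.2.2]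
  have hfeq : ∀ t, f1 t = f4 t ∧ f2 t = f4 t ∧ f3 t = f4 t := by
    intro t
    have h := hlin4 t
    have := hU (f1 t - f4 t) (f2 t - f4 t) (f3 t - f4 t) (by
      rw [← sub_eq_zero] at h
      rw [← h]; module)
    refine ⟨?_, ?_, ?_⟩ <;> linarith [this.1, this.2.1, this.2.2]
  obtain rfl : f1 = f4 := funext fun t => (hfeq t).1
  obtain rfl : f2 = f1 := funext fun t => (hfeq t).2.1
  obtain rfl : f3 = f2 := funext fun t => (hfeq t).2.2
  -- direction 5
  have hQ5 : (f3 p * f3 q) • u12 + (f3 p * f3 r) • u13 + (f3 q * f3 r) • u23 = 0 := by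
    have h := hF5 0 (-1)
    have e : (0 : V3) + (-1 : ℝ) • (p • e1 + q • e2 + r • e3)
      = (-p) • e1 + (-q) • e2 + (-r) • e3 := by module
    rw [e, zero_add, hexp, hexp, odd f5 hf5 ha5, hf5.one, odd f3 hf3 ha3, odd f3 hf3 ha3,
      odd f3 hf3 ha3] at h
    have : (2:ℝ) • ((f3 p * f3 q) • u12 + (f3 p * f3 r) • u13 + (f3 q * f3 r) • u23) = 0 := by
      rw [← sub_eq_zero] at h
      rw [← h]; module
    exact (smul_eq_zero.1 this).resolve_left (by norm_num)
  have fne : ∀ s, s ≠ 0 → f3 s ≠ 0 := by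
    intro s hs h
    exact hs (hf3.bij.1 (h.trans hf3.zero.symm))
  have hP := fne p hp
  have hQ := fne q hq
  have hR := fne r hr
  have hPQ : f3 q - f3 p ≠ 0 := fun h => hpq (hf3.bij.1 (sub_eq_zero.1 h)).symm
  have hPR : f3 p - f3 r ≠ 0 := fun h => hpr (hf3.bij.1 (sub_eq_zero.1 h))
  have hQR : f3 r - f3 q ≠ 0 := fun h => hqr (hf3.bij.1 (sub_eq_zero.1 h)).symm
  set P := f3 p
  set Q := f3 q
  set R := f3 r
  obtain ⟨w, hw12⟩ : ∃ w : V3, u12 = (R * (Q - P)) • w :=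
    ⟨(R * (Q - P))⁻¹ • u12, by rw [smul_smul, mul_inv_cancel₀ (mul_ne_zero hR hPQ), one_smul]⟩
  have hw13 : u13 = (Q * (P - R)) • w := by
    have : (R * (P - Q)) • (u13 - (Q * (P - R)) • w) = 0 := by
      have e : (R * (P - Q)) • (u13 - (Q * (P - R)) • w) =
        ((P * Q) • u12 + (P * R) • u13 + (Q * R) • u23) - (Q * R) • (u12 + u13 + u23)
        - (Q * (P - R)) • (u12 - (R * (Q - P)) • w) := by module
      rw [e, hQ5, hE, hw12]; simp
    have h := (smul_eq_zero.1 this).resolve_left (mul_ne_zero hR (by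
      intro h; apply hPQ; linarith))
    exact sub_eq_zero.1 h
  have hw23 : u23 = (P * (R - Q)) • w := by
    have e : u23 = (u12 + u13 + u23) - u12 - u13 := by abel
    rw [e, hE, hw12, hw13]; module
  have hw : w = 0 := by
    by_contra hwne
    have hlu : LinearIndependent ℝ ![u1, u2, u3] := by
      rw [Fintype.linearIndependent_iff]
      intro g hg
      rw [Fin.sum_univ_three] at hg
      have := hU _ _ _ hg
      intro i
      fin_cases i
      · exact this.1
      · exact this.2.1
      · exact this.2.2
    have hspan := hlu.span_eq_top_of_card_eq_finrank (by simp)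
    have hmem : w ∈ Submodule.span ℝ (Set.range ![u1, u2, u3]) := by rw [hspan]; trivial
    obtain ⟨k, hk⟩ := (Submodule.mem_span_range_iff_exists_fun ℝ).1 hmem
    rw [Fin.sum_univ_three] at hk
    have hk : k 0 • u1 + k 1 • u2 + k 2 • u3 = w := hk
    generalize k 0 = a at hk
    generalize k 1 = b at hk
    generalize k 2 = c at hk
    -- not all of a, b, c vanish
    have hne : ¬ (a = 0 ∧ b = 0 ∧ c = 0) := by
      rintro ⟨rfl, rfl, rfl⟩
      apply hwne; rw [← hk]; module
    set c12 := R * (Q - P) with hc12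
    set c13 := Q * (P - R) with hc13
    set c23 := P * (R - Q) with hc23
    have n12 : c12 ≠ 0 := mul_ne_zero hR hPQ
    have n13 : c13 ≠ 0 := mul_ne_zero hQ hPR
    have n23 : c23 ≠ 0 := mul_ne_zero hP hQR
    have move : ∀ X Y Z s : ℝ, s ≠ 0 →
        1 + (X * (c12 * b + c13 * c) + Y * (c12 * a + c23 * c) + Z * (c13 * a + c23 * b))
          + s * (c12 * a * b + c13 * a * c + c23 * b * c) = 0 → False := by
      intro X Y Z s hs0 h
      have := hGinj (X + s * a) (Y + s * b) (Z + s * c) X Y Z (by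
        rw [hw12, hw13, hw23, ← sub_eq_zero]
        have e : (s * (1 + (X * (c12 * b + c13 * c) + Y * (c12 * a + c23 * c)
          + Z * (c13 * a + c23 * b)) + s * (c12 * a * b + c13 * a * c + c23 * b * c))) • w
          + s • (a • u1 + b • u2 + c • u3 - w) = 0 := by
          rw [h, hk]; simp
        rw [← e]; module)
      apply hne
      have aux : ∀ X a : ℝ, X + s * a = X → a = 0 := by
        intro X a h
        have : s * a = 0 := by linarith
        exact (mul_eq_zero.1 this).resolve_left hs0
      exact ⟨aux _ _ this.1, aux _ _ this.2.1, aux _ _ this.2.2⟩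
    by_cases hq0 : c12 * a * b + c13 * a * c + c23 * b * c = 0
    · set g1 := c12 * b + c13 * c with hg1
      set g2 := c12 * a + c23 * c with hg2
      set g3 := c13 * a + c23 * b with hg3
      have hN : g1 ^ 2 + g2 ^ 2 + g3 ^ 2 ≠ 0 := by
        intro h
        have z1 : g1 = 0 := by nlinarith [sq_nonneg g1, sq_nonneg g2, sq_nonneg g3]
        have z2 : g2 = 0 := by nlinarith [sq_nonneg g1, sq_nonneg g2, sq_nonneg g3]
        have z3 : g3 = 0 := by nlinarith [sq_nonneg g1, sq_nonneg g2, sq_nonneg g3]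
        apply hne
        have t1 : (2 * c12 * c13) * a = 0 := by
          linear_combination c13 * z2 + c12 * z3 - c23 * z1
        have t2 : (2 * c12 * c23) * b = 0 := by
          linear_combination c23 * z1 + c12 * z3 - c13 * z2
        have t3 : (2 * c13 * c23) * c = 0 := by
          linear_combination c23 * z1 + c13 * z2 - c12 * z3
        refine ⟨(mul_eq_zero.1 t1).resolve_left ?_, (mul_eq_zero.1 t2).resolve_left ?_,
          (mul_eq_zero.1 t3).resolve_left ?_⟩ <;> positivity
      refine move (-g1 / (g1 ^ 2 + g2 ^ 2 + g3 ^ 2)) (-g2 / (g1 ^ 2 + g2 ^ 2 + g3 ^ 2))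
        (-g3 / (g1 ^ 2 + g2 ^ 2 + g3 ^ 2)) 1 one_ne_zero ?_
      rw [hq0]
      field_simp
      ring
    · refine move 0 0 0 (-1 / (c12 * a * b + c13 * a * c + c23 * b * c))
        (div_ne_zero (by norm_num) hq0) ?_
      rw [div_mul_cancel₀ _ hq0]; ring
  refine ⟨u1, u2, u3, f3, hf3, ha3, hU, ?_⟩
  intro x y z
  rw [hexp, hw12, hw13, hw23, hw]
  simp

theorem lineThru_smul (a b : V3) (s : ℝ) (hs : s ≠ 0) : lineThru a (s • b) = lineThru a b := by
  ext x
  constructor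
  · rintro ⟨t, rfl⟩
    exact ⟨t * s, by rw [smul_smul]⟩
  · rintro ⟨t, rfl⟩
    exact ⟨t / s, by rw [smul_smul, div_mul_cancel₀ _ hs]⟩

/-- **Theorem (fundamental theorem in ℝ³ with five directions).**
If `v₁,…,v₅ ∈ ℝ³` are `3`-independent and `F : ℝ³ → ℝ³` is an injection mapping each
line in `ℒ(v₁,…,v₅)` onto a line, then `F` is affine-additive; moreover there exist
bases `u₁,u₂,u₃` and `w₁,w₂,w₃` of `ℝ³`, and additive bijections `fᵢ : ℝ → ℝ` with
`fᵢ 1 = 1`, such that `F (∑ αᵢ uᵢ) - F 0 = ∑ fᵢ (αᵢ) wᵢ`. -/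
theorem affine_additive_of_five_directions_R3
    (v : Fin 5 → (Fin 3 → ℝ))
    (hv : ∀ s : Finset (Fin 5), s.card = 3 →
      LinearIndependent ℝ (fun i : s => v i.1))
    (F : (Fin 3 → ℝ) → (Fin 3 → ℝ))
    (hinj : Function.Injective F)
    (honto : ∀ (i : Fin 5) (a : Fin 3 → ℝ), IsLine (F '' lineThru a (v i))) :
    (∃ (A : (Fin 3 → ℝ) → (Fin 3 → ℝ)) (c : Fin 3 → ℝ),
      (∀ x y, A (x + y) = A x + A y) ∧ ∀ x, F x = A x + c) ∧
    ∃ (u w : Fin 3 → (Fin 3 → ℝ)) (f : Fin 3 → ℝ → ℝ),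
      LinearIndependent ℝ u ∧ Submodule.span ℝ (Set.range u) = ⊤ ∧
      LinearIndependent ℝ w ∧ Submodule.span ℝ (Set.range w) = ⊤ ∧
      (∀ i, Function.Bijective (f i) ∧ (∀ a b : ℝ, f i (a + b) = f i a + f i b) ∧
        f i 1 = 1) ∧
      ∀ α : Fin 3 → ℝ, F (∑ i, α i • u i) - F 0 = ∑ i, f i (α i) • w i := by

  have hind : ∀ i j k : Fin 5, i ≠ j → i ≠ k → j ≠ k → ∀ x y z : ℝ,
      x • v i + y • v j + z • v k = 0 → x = 0 ∧ y = 0 ∧ z = 0 := by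
    intro i j k hij hik hjk x y z h
    have hs := hv {i, j, k} (Finset.card_eq_three.2 ⟨i, j, k, hij, hik, hjk, rfl⟩)
    have hs2 : LinearIndepOn ℝ v (({i, j, k} : Finset (Fin 5)) : Set (Fin 5)) := hs
    rw [linearIndepOn_finset_iff] at hs2
    have := hs2 (fun l => if l = i then x else if l = j then y else z) (by
      rw [Finset.sum_insert (by simp [hij, hik]), Finset.sum_insert (by simp [hjk]),
        Finset.sum_singleton]
      simp only [if_true, hij.symm, hik.symm, hjk.symm, if_false]
      rw [← h]; abel)
    have a1 := this i (by simp)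
    have a2 := this j (by simp)
    have a3 := this k (by simp)
    simp only [if_true, hij.symm, hik.symm, hjk.symm, if_false] at a1 a2 a3
    exact ⟨a1, a2, a3⟩
  have hli : ∀ e1 e2 e3 : V3, (∀ x y z : ℝ, x • e1 + y • e2 + z • e3 = 0 →
      x = 0 ∧ y = 0 ∧ z = 0) → LinearIndependent ℝ ![e1, e2, e3] := by
    intro e1 e2 e3 h
    rw [Fintype.linearIndependent_iff]
    intro g hg
    rw [Fin.sum_univ_three] at hg
    have := h _ _ _ hg
    intro i
    fin_cases i
    · exact this.1
    · exact this.2.1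
    · exact this.2.2
  have htop : ∀ e : Fin 3 → V3, LinearIndependent ℝ e → Submodule.span ℝ (Set.range e) = ⊤ := by
    intro e h
    exact h.span_eq_top_of_card_eq_finrank (by simp)
  have hsp : ∀ e1 e2 e3 : V3, (∀ x y z : ℝ, x • e1 + y • e2 + z • e3 = 0 →
      x = 0 ∧ y = 0 ∧ z = 0) → ∀ a : V3, ∃ x y z : ℝ, a = x • e1 + y • e2 + z • e3 := by
    intro e1 e2 e3 h a
    have hmem : a ∈ Submodule.span ℝ (Set.range ![e1, e2, e3]) := by
      rw [htop _ (hli _ _ _ h)]; trivial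
    obtain ⟨k, hk⟩ := (Submodule.mem_span_range_iff_exists_fun ℝ).1 hmem
    rw [Fin.sum_univ_three] at hk
    exact ⟨k 0, k 1, k 2, hk.symm⟩
  have h012 := hind 0 1 2 (by decide) (by decide) (by decide)
  obtain ⟨a, b, c, h3⟩ := hsp _ _ _ h012 (v 3)
  obtain ⟨p, q, r, h4⟩ := hsp _ _ _ h012 (v 4)
  have ha : a ≠ 0 := by
    rintro rfl
    have := (hind 1 2 3 (by decide) (by decide) (by decide) b c (-1) (by rw [h3]; module)).2.2
    norm_num at this
  have hb : b ≠ 0 := by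
    rintro rfl
    have := (hind 0 2 3 (by decide) (by decide) (by decide) a c (-1) (by rw [h3]; module)).2.2
    norm_num at this
  have hc : c ≠ 0 := by
    rintro rfl
    have := (hind 0 1 3 (by decide) (by decide) (by decide) a b (-1) (by rw [h3]; module)).2.2
    norm_num at this
  have hp : p ≠ 0 := by
    rintro rfl
    have := (hind 1 2 4 (by decide) (by decide) (by decide) q r (-1) (by rw [h4]; module)).2.2
    norm_num at this
  have hq : q ≠ 0 := by
    rintro rfl
    have := (hind 0 2 4 (by decide) (by decide) (by decide) p r (-1) (by rw [h4]; module)).2.2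
    norm_num at this
  have hr : r ≠ 0 := by
    rintro rfl
    have := (hind 0 1 4 (by decide) (by decide) (by decide) p q (-1) (by rw [h4]; module)).2.2
    norm_num at this
  have hpq : p / a ≠ q / b := by
    intro h
    rw [div_eq_div_iff ha hb] at h
    have := (hind 2 3 4 (by decide) (by decide) (by decide) (c * p - a * r) (-p) a (by
      rw [h3, h4]
      have : (c * p - a * r) • v 2 + (-p) • (a • v 0 + b • v 1 + c • v 2)
        + a • (p • v 0 + q • v 1 + r • v 2) = (q * a - p * b) • v 1 := by module
      rw [this, h, sub_self, zero_smul])).2.2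
    exact ha this
  have hpr : p / a ≠ r / c := by
    intro h
    rw [div_eq_div_iff ha hc] at h
    have := (hind 1 3 4 (by decide) (by decide) (by decide) (b * p - a * q) (-p) a (by
      rw [h3, h4]
      have : (b * p - a * q) • v 1 + (-p) • (a • v 0 + b • v 1 + c • v 2)
        + a • (p • v 0 + q • v 1 + r • v 2) = (r * a - p * c) • v 2 := by module
      rw [this, h, sub_self, zero_smul])).2.2
    exact ha this
  have hqr : q / b ≠ r / c := by
    intro h
    rw [div_eq_div_iff hb hc] at h
    have := (hind 0 3 4 (by decide) (by decide) (by decide) (a * q - b * p) (-q) b (by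
      rw [h3, h4]
      have : (a * q - b * p) • v 0 + (-q) • (a • v 0 + b • v 1 + c • v 2)
        + b • (p • v 0 + q • v 1 + r • v 2) = (r * b - q * c) • v 2 := by module
      rw [this, h, sub_self, zero_smul])).2.2
    exact hb this
  have hie : ∀ x y z : ℝ, x • (a • v 0) + y • (b • v 1) + z • (c • v 2) = 0 →
      x = 0 ∧ y = 0 ∧ z = 0 := by
    intro x y z h
    have := h012 (x * a) (y * b) (z * c) (by rw [← h]; module)
    exact ⟨(mul_eq_zero.1 this.1).resolve_right ha, (mul_eq_zero.1 this.2.1).resolve_right hb,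
      (mul_eq_zero.1 this.2.2).resolve_right hc⟩
  obtain ⟨u1, u2, u3, f, hf, hfa, hU, hform⟩ := core F hinj (a • v 0) (b • v 1) (c • v 2)
    (p / a) (q / b) (r / c) hie (hsp _ _ _ hie)
    (div_ne_zero hp ha) (div_ne_zero hq hb) (div_ne_zero hr hc) hpq hpr hqr
    (fun x => by rw [lineThru_smul _ _ _ ha]; exact honto 0 x)
    (fun x => by rw [lineThru_smul _ _ _ hb]; exact honto 1 x)
    (fun x => by rw [lineThru_smul _ _ _ hc]; exact honto 2 x)
    (fun x => by rw [← h3]; exact honto 3 x)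
    (fun x => by
      rw [smul_smul, smul_smul, smul_smul, div_mul_cancel₀ _ ha, div_mul_cancel₀ _ hb,
        div_mul_cancel₀ _ hc, ← h4]
      exact honto 4 x)
  refine ⟨⟨fun x => F x - F 0, F 0, ?_, fun x => by simp⟩, ?_⟩
  · intro x y
    obtain ⟨x1, x2, x3, rfl⟩ := hsp _ _ _ hie x
    obtain ⟨y1, y2, y3, rfl⟩ := hsp _ _ _ hie y
    have e : x1 • (a • v 0) + x2 • (b • v 1) + x3 • (c • v 2)
      + (y1 • (a • v 0) + y2 • (b • v 1) + y3 • (c • v 2))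
      = (x1 + y1) • (a • v 0) + (x2 + y2) • (b • v 1) + (x3 + y3) • (c • v 2) := by module
    simp only
    rw [e, hform, hform, hform, hfa, hfa, hfa]
    module
  · refine ⟨![a • v 0, b • v 1, c • v 2], ![u1, u2, u3], fun _ => f, hli _ _ _ hie,
      htop _ (hli _ _ _ hie), hli _ _ _ hU, htop _ (hli _ _ _ hU),
      fun _ => ⟨hf.bij, hfa, hf.one⟩, ?_⟩
    intro α
    rw [Fin.sum_univ_three, Fin.sum_univ_three]
    have := hform (α 0) (α 1) (α 2)
    change F (α 0 • (a • v 0) + α 1 • (b • v 1) + α 2 • (c • v 2)) - F 0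
      = f (α 0) • u1 + f (α 1) • u2 + f (α 2) • u3
    rw [this]
    abel
end

section
/- Let n ≥ 2. Let p̄₁, ..., p̄ₙ, p̄_{n+1} ∈ ℝPⁿ be projective points in general position and let p̄_{n+2} ∈ ℝPⁿ be a projective point satisfying p̄_{n+2} ∉ s̄p{p̄₁, ..., p̄ₙ} and p̄_{n+2} ≠ p̄_{n+1}. Let F : ℝPⁿ → ℝPⁿ be an injective mapping that maps any projective line containing one of the points p̄₁, ..., p̄_{n+2} onto a projective line. Then F is a projective-linear mapping. -/
open scoped LinearAlgebra.Projectivization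

/-- A subset of `ℝPⁿ` (the projectivization of `ℝ^{n+1}`) is a projective line if it
consists of all projective points lying in a fixed two-dimensional linear subspace. -/
def IsProjLine {n : ℕ} (l : Set (ℙ ℝ (Fin (n + 1) → ℝ))) : Prop :=
  ∃ W : Submodule ℝ (Fin (n + 1) → ℝ), Module.finrank ℝ W = 2 ∧
    l = {p | p.submodule ≤ W}

/-- A self-map of `ℝPⁿ` is projective-linear if it is induced by an invertible linear
transformation of `ℝ^{n+1}`. -/
def IsProjLinear {n : ℕ} (F : ℙ ℝ (Fin (n + 1) → ℝ) → ℙ ℝ (Fin (n + 1) → ℝ)) : Prop :=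
  ∃ A : (Fin (n + 1) → ℝ) ≃ₗ[ℝ] (Fin (n + 1) → ℝ),
    F = Projectivization.map (A : (Fin (n + 1) → ℝ) →ₗ[ℝ] (Fin (n + 1) → ℝ)) A.injective


lemma gneg (g : ℝ → ℝ) (hinj : Function.Injective g) (h1 : g 1 = 1)
    (hm : ∀ x y, g (x * y) = g x * g y) : g (-1) = -1 := by
  have h := hm (-1) (-1)
  norm_num [h1] at h
  have h2 : (g (-1) - 1) * (g (-1) + 1) = 0 := by linarith
  rcases mul_eq_zero.1 h2 with h3 | h3
  · have : g (-1) = g 1 := by linarith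
    have := hinj this
    norm_num at this
  · linarith

lemma gid (g : ℝ → ℝ) (h0 : g 0 = 0) (h1 : g 1 = 1)
    (hm : ∀ x y, g (x * y) = g x * g y) (ha : ∀ x y, g (x + y) = g x + g y) (x : ℝ) : g x = x := by
  let G : ℝ →+* ℝ := ⟨⟨⟨g, h1⟩, hm⟩, h0, ha⟩
  have : G = RingHom.id ℝ := Subsingleton.elim _ _
  exact congrArg (fun k : ℝ →+* ℝ => k x) this

lemma case1 (g : ℝ → ℝ) (hinj : Function.Injective g) (h0 : g 0 = 0) (h1 : g 1 = 1)
    (hm : ∀ x y, g (x * y) = g x * g y)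
    (hA : ∀ t s : ℝ, g (1 + t * s) - 1 = g t * (g (1 + s) - 1)) (x : ℝ) : g x = x := by
  have hn := gneg g hinj h1 hm
  have e1 := hA (-1) 1
  norm_num [h0, hn] at e1
  have e2 : ∀ t, g (1 + t) = 1 + g t := by
    intro t
    have := hA t 1
    norm_num at this
    rw [show g 2 = 2 by linarith] at this
    linarith
  refine gid g h0 h1 hm ?_ x
  intro x y
  by_cases hx : x = 0
  · simp [hx, h0]
  · rw [show x + y = x * (1 + y / x) by field_simp, hm, e2, mul_add, ← hm]
    congr 2
    · ring
    · field_simp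

lemma case2 (g : ℝ → ℝ) (hinj : Function.Injective g) (h0 : g 0 = 0) (h1 : g 1 = 1)
    (hm : ∀ x y, g (x * y) = g x * g y)
    (hA : ∀ t s : ℝ, ∃ d, g (1 + t * s) - 1 = d * (g (1 + s) - 1) ∧
      g (1 + t) - 1 = d * (g (1 + 1) - 1)) (x : ℝ) : g x = x := by
  have hn := gneg g hinj h1 hm
  have hg2 : g 2 = 2 := by
    obtain ⟨d, e1, e2⟩ := hA (-1) (-1)
    norm_num [h0] at e1 e2
    have h3 : g 2 ≠ 0 := by
      rw [← h0]; exact fun h => by simpa using hinj h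
    have h4 : g 2 * (g 2 - 2) = 0 := by
      linear_combination (g 2 - 1) * e1 + e2
    rcases mul_eq_zero.1 h4 with h | h
    · exact absurd h h3
    · linarith
  have e2 : ∀ u, g (1 - u) = 2 - g (1 + u) := by
    intro u
    obtain ⟨d, e1, e2⟩ := hA (-1) u
    norm_num [h0, hg2] at e1 e2
    rw [← e2] at e1
    rw [sub_eq_add_neg]
    linarith
  refine gid g h0 h1 hm ?_ x
  intro x y
  by_cases hx : x + y = 0
  · have : y = (-1) * x := by linarith
    rw [hx, this, hm, hn, h0]; ring
  · have e3 := e2 ((x - y) / (x + y))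
    rw [show 1 - (x - y) / (x + y) = 2 * y / (x + y) by field_simp; ring,
      show 1 + (x - y) / (x + y) = 2 * x / (x + y) by field_simp; ring] at e3
    have e4 : ∀ z, g (z) * 2 = g (2 * z / (x + y)) * g (x + y) := by
      intro z
      rw [← hm, div_mul_cancel₀ _ hx, hm, hg2]; ring
    have := e4 x
    have := e4 y
    rw [e3] at this
    linarith

lemma affine {n : ℕ} (hn : 2 ≤ n) (f : (Fin n → ℝ) → (Fin n → ℝ)) (hinj : Function.Injective f)
    (f0 : f 0 = 0) (hL1 : ∀ (x : Fin n → ℝ) (i : Fin n) (t : ℝ), ∃ s : ℝ,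
      f (x + t • (Pi.single i 1 : Fin n → ℝ)) = f x + s • (Pi.single i 1 : Fin n → ℝ))
    (hL2 : ∀ (v : Fin n → ℝ) (t : ℝ), ∃ d : ℝ, f (t • v) = d • f v)
    (r : Fin n → ℝ) (hr : r ≠ 0)
    (hL3 : ∀ (v : Fin n → ℝ) (t : ℝ), ∃ d : ℝ, f (r + t • v) = f r + d • (f (r + v) - f r)) :
    ∃ d : Fin n → ℝ, (∀ i, d i ≠ 0) ∧ ∀ x i, f x i = d i * x i := by
  classical
  have step : ∀ (j : Fin n) (s : Finset (Fin n)) (x w : Fin n → ℝ), j ∉ s →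
      f (x + ∑ i ∈ s, w i • Pi.single i 1) j = f x j := by
    intro j s x w
    induction s using Finset.induction_on with
    | empty => simp
    | insert a s ha ih =>
      intro hj
      simp only [Finset.mem_insert, not_or] at hj
      rw [Finset.sum_insert ha, add_comm (w a • _), ← add_assoc]
      obtain ⟨c, hc⟩ := hL1 (x + ∑ i ∈ s, w i • Pi.single i 1) a (w a)
      rw [hc, ← ih hj.2]
      simp [hj.1]
  have hdep : ∀ (j : Fin n) (x : Fin n → ℝ), f x j = f (x j • Pi.single j 1) j := by
    intro j x
    rw [← step j (Finset.univ.erase j) (x j • Pi.single j 1) x (by simp),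
      Finset.add_sum_erase _ (fun i => x i • (Pi.single i 1 : Fin n → ℝ)) (Finset.mem_univ j)]
    congr 2
    ext k
    simp [Finset.sum_apply, Pi.single_apply]
  let k : Fin n → ℝ → ℝ := fun j t => f (t • Pi.single j 1) j
  have hk : ∀ x j, f x j = k j (x j) := fun x j => hdep j x
  have k0 : ∀ j, k j 0 = 0 := by intro j; simp [k, f0]
  have kinj : ∀ j, Function.Injective (k j) := by
    intro j a b hab
    have : f (a • Pi.single j 1) = f (b • Pi.single j 1) := by
      ext i
      rw [hk, hk]
      by_cases h : i = j
      · subst h; simpa using hab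
      · simp [h]
    simpa using congrFun (hinj this) j
  have kne : ∀ j t, t ≠ 0 → k j t ≠ 0 := by
    intro j t ht h
    exact ht (kinj j (h.trans (k0 j).symm))
  have k1 : ∀ j, k j 1 ≠ 0 := fun j => kne j 1 one_ne_zero
  obtain ⟨j0, hj0⟩ : ∃ j, r j ≠ 0 := by
    by_contra h; push Not at h; exact hr (funext h)
  let g : ℝ → ℝ := fun t => k j0 t / k j0 1
  have hg : ∀ j t, k j t = k j 1 * g t := by
    intro j t
    obtain ⟨d, hd⟩ := hL2 (fun _ => 1) t
    have e1 := congrFun hd j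
    have e2 := congrFun hd j0
    simp only [hk, Pi.smul_apply, smul_eq_mul, mul_one] at e1 e2
    have := k1 j0
    simp only [g]
    rw [e1, e2]; field_simp
  have ginj : Function.Injective g := by
    intro a b hab
    exact kinj j0 (by rw [hg j0 a, hg j0 b, hab])
  have g0 : g 0 = 0 := by simp [g, k0]
  have g1 : g 1 = 1 := by simp only [g]; exact div_self (k1 j0)
  obtain ⟨j1, hj1⟩ : ∃ j, j ≠ j0 := by
    have : Nontrivial (Fin n) := Fin.nontrivial_iff_two_le.2 hn
    exact exists_ne j0
  have gm : ∀ x y, g (x * y) = g x * g y := by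
    intro x y
    obtain ⟨d, hd⟩ := hL2 (fun i => if i = j0 then y else 1) x
    have e1 := congrFun hd j1
    have e2 := congrFun hd j0
    simp only [hk, Pi.smul_apply, smul_eq_mul, mul_one, if_true, if_neg hj1] at e1 e2
    rw [hg] at e1 e2
    rw [hg j0 y] at e2
    have h1 : g x = d := by
      apply mul_left_cancel₀ (k1 j1); rw [e1]; ring
    apply mul_left_cancel₀ (k1 j0); rw [e2, h1]; ring
  have gid : ∀ x, g x = x := by
    have key : ∀ (j : Fin n), r j ≠ 0 → ∀ a d : ℝ, ∀ b : ℝ, 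
        k j (r j + a * r j) = k j (r j) + d * (k j (r j + b * r j) - k j (r j)) →
        g (1 + a) - 1 = d * (g (1 + b) - 1) := by
      intro j hj a d b h
      rw [show r j + a * r j = r j * (1 + a) by ring, 
        show r j + b * r j = r j * (1 + b) by ring, hg j, hg j (r j), hg j (r j * (1 + b)), gm, gm] at h
      have h2 : g (r j) ≠ 0 := by
        intro h; exact hj (ginj (h.trans g0.symm))
      apply mul_left_cancel₀ (mul_ne_zero (k1 j) h2)
      linear_combination h
    by_cases hr1 : r j1 = 0
    · apply case1 g ginj g0 g1 gm
      intro t s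
      obtain ⟨d, hd⟩ := hL3 (fun i => if i = j0 then s * r j0 else 1) t
      have e1 := congrFun hd j1
      have e2 := congrFun hd j0
      simp only [hk, Pi.smul_apply, Pi.add_apply, Pi.sub_apply, smul_eq_mul, mul_one, if_true, if_neg hj1, hr1, zero_add, k0, sub_zero] at e1 e2
      have h1 : g t = d := by
        apply mul_left_cancel₀ (k1 j1); rw [← hg, e1]; ring
      rw [h1]
      apply key j0 hj0
      rw [← e2]; ring_nf
    · apply case2 g ginj g0 g1 gm
      intro t s
      obtain ⟨d, hd⟩ := hL3 (fun i => if i = j0 then s * r j0 else r i) t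
      have e1 := congrFun hd j1
      have e2 := congrFun hd j0
      simp only [hk, Pi.smul_apply, Pi.add_apply, Pi.sub_apply, smul_eq_mul, if_true, if_neg hj1] at e1 e2
      refine ⟨d, key j0 hj0 _ _ _ ?_, key j1 hr1 _ _ _ ?_⟩
      · rw [← e2]; ring_nf
      · rw [e1]; ring_nf
  refine ⟨fun j => k j 1, k1, fun x j => ?_⟩
  rw [hk, hg, gid]

open Projectivization in
lemma sub_le_pair {V : Type*} [AddCommGroup V] [Module ℝ V] (v a b : V) (hv : v ≠ 0) (ha : a ≠ 0)
    (hb : b ≠ 0) : (mk ℝ v hv).submodule ≤ (mk ℝ a ha).submodule ⊔ (mk ℝ b hb).submodule ↔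
      ∃ α β : ℝ, α • a + β • b = v := by
  rw [submodule_mk, submodule_mk, submodule_mk, ← Submodule.span_insert,
    Submodule.span_singleton_le_iff_mem, Submodule.mem_span_pair]

lemma single_ne {n : ℕ} (i : Fin n) : (Pi.single i 1 : Fin n → ℝ) ≠ 0 := by
  intro h; simpa using congrFun h i

/-- the standard projective points -/
noncomputable def stdPt {n : ℕ} (i : Fin (n + 1)) : ℙ ℝ (Fin (n + 1) → ℝ) :=
  Projectivization.mk ℝ (Pi.single i 1) (single_ne i)

/-- affine lift -/
def aVec {n : ℕ} (x : Fin n → ℝ) : Fin (n + 1) → ℝ := Fin.snoc x 1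

@[simp] lemma aVec_last {n : ℕ} (x : Fin n → ℝ) : aVec x (Fin.last n) = 1 := by simp [aVec]
@[simp] lemma aVec_cast {n : ℕ} (x : Fin n → ℝ) (i : Fin n) : aVec x i.castSucc = x i := by
  simp [aVec]

lemma aVec_ne {n : ℕ} (x : Fin n → ℝ) : aVec x ≠ 0 := by
  intro h; simpa using congrFun h (Fin.last n)

/-- affine point -/
noncomputable def aPt {n : ℕ} (x : Fin n → ℝ) : ℙ ℝ (Fin (n + 1) → ℝ) :=
  Projectivization.mk ℝ (aVec x) (aVec_ne x)

lemma mem_hyper {n : ℕ} (v : Fin (n + 1) → ℝ) :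
    v ∈ (⨆ i : Fin n, (stdPt i.castSucc).submodule) ↔ v (Fin.last n) = 0 := by
  constructor
  · intro h
    have : (⨆ i : Fin n, (stdPt i.castSucc).submodule) ≤
        LinearMap.ker (LinearMap.proj (R := ℝ) (φ := fun _ : Fin (n + 1) => ℝ) (Fin.last n)) := by
      refine iSup_le fun i => ?_
      rw [stdPt, Projectivization.submodule_mk, Submodule.span_singleton_le_iff_mem]
      simp
    simpa using this h
  · intro h
    have : v = ∑ i : Fin n, v i.castSucc • (Pi.single i.castSucc 1 : Fin (n + 1) → ℝ) := by
      ext k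
      refine Fin.lastCases ?_ (fun k => ?_) k
      · simp [h, Finset.sum_apply, Pi.single_apply, Fin.castSucc_ne_last]
      · simp [Finset.sum_apply, Pi.single_apply]
    rw [this]
    refine Submodule.sum_mem _ fun i _ => Submodule.mem_iSup_of_mem i ?_
    exact Submodule.smul_mem _ _ (Submodule.mem_span_singleton_self _)

lemma le_hyper {n : ℕ} (v : Fin (n + 1) → ℝ) (hv : v ≠ 0) :
    (Projectivization.mk ℝ v hv).submodule ≤ (⨆ i : Fin n, (stdPt i.castSucc).submodule) ↔
      v (Fin.last n) = 0 := by
  rw [← mem_hyper, Projectivization.submodule_mk, Submodule.span_singleton_le_iff_mem]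

lemma exists_aPt {n : ℕ} (q : ℙ ℝ (Fin (n + 1) → ℝ))
    (hq : ¬ q.submodule ≤ (⨆ i : Fin n, (stdPt i.castSucc).submodule)) : ∃ x, q = aPt x := by
  induction q using Projectivization.ind with
  | h v hv =>
    rw [le_hyper] at hq
    refine ⟨fun i => v i.castSucc / v (Fin.last n), ?_⟩
    rw [aPt, Projectivization.mk_eq_mk_iff']
    refine ⟨v (Fin.last n), ?_⟩
    ext k
    refine Fin.lastCases ?_ (fun k => ?_) k
    · simp
    · simp; field_simp

lemma aPt_inj {n : ℕ} (x y : Fin n → ℝ) (h : aPt x = aPt y) : x = y := by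
  rw [aPt, aPt, Projectivization.mk_eq_mk_iff'] at h
  obtain ⟨a, ha⟩ := h
  have := congrFun ha (Fin.last n)
  simp at this
  subst this
  ext i
  simpa using (congrFun ha i.castSucc).symm

lemma aPt_zero {n : ℕ} : aPt (0 : Fin n → ℝ) = stdPt (Fin.last n) := by
  have : aVec (0 : Fin n → ℝ) = Pi.single (Fin.last n) 1 := by
    ext k
    refine Fin.lastCases ?_ (fun k => ?_) k <;> simp [Fin.castSucc_ne_last]
  simp [aPt, stdPt, this]

lemma aPt_line {n : ℕ} (x a b : Fin n → ℝ) :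
    (aPt x).submodule ≤ (aPt a).submodule ⊔ (aPt b).submodule ↔ ∃ t : ℝ, x = a + t • (b - a) := by
  rw [aPt, aPt, aPt, sub_le_pair]
  constructor
  · rintro ⟨α, β, h⟩
    have h1 := congrFun h (Fin.last n)
    simp at h1
    refine ⟨β, ?_⟩
    ext i
    have h2 := congrFun h i.castSucc
    simp at h2
    simp
    rw [← h2, show α = 1 - β by linarith]; ring
  · rintro ⟨t, rfl⟩
    refine ⟨1 - t, t, ?_⟩
    ext k
    refine Fin.lastCases ?_ (fun k => ?_) k
    · simp
    · simp; ring

lemma std_line {n : ℕ} (x b : Fin n → ℝ) (i : Fin n) :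
    (aPt x).submodule ≤ (stdPt i.castSucc).submodule ⊔ (aPt b).submodule ↔
      ∃ t : ℝ, x = b + t • (Pi.single i 1 : Fin n → ℝ) := by
  have hs : ∀ j : Fin n, (Pi.single i.castSucc 1 : Fin (n + 1) → ℝ) j.castSucc =
      (Pi.single i 1 : Fin n → ℝ) j := by
    intro j; simp [Pi.single_apply]
  have hl : (Pi.single i.castSucc 1 : Fin (n + 1) → ℝ) (Fin.last n) = 0 := by
    simp [Fin.castSucc_ne_last, Pi.single_apply, (Fin.castSucc_ne_last i).symm]
  rw [aPt, aPt, stdPt, sub_le_pair]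
  constructor
  · rintro ⟨α, β, h⟩
    have h1 := congrFun h (Fin.last n)
    simp [hl] at h1
    refine ⟨α, ?_⟩
    ext j
    have h2 := congrFun h j.castSucc
    simp [hs, h1] at h2
    simp
    rw [← h2]; ring
  · rintro ⟨t, rfl⟩
    refine ⟨t, 1, ?_⟩
    ext k
    refine Fin.lastCases ?_ (fun k => ?_) k
    · simp [hl]
    · simp [hs]; ring

lemma normalized {n : ℕ} (hn : 2 ≤ n) (r : ℙ ℝ (Fin (n + 1) → ℝ))
    (hr1 : ¬ r.submodule ≤ ⨆ i : Fin n, (stdPt i.castSucc).submodule)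
    (hr2 : r ≠ stdPt (Fin.last n))
    (F : ℙ ℝ (Fin (n + 1) → ℝ) → ℙ ℝ (Fin (n + 1) → ℝ))
    (hinj : Function.Injective F)
    (hF : ∀ i, F (stdPt i) = stdPt i)
    (hZ : ∀ x : ℙ ℝ (Fin (n + 1) → ℝ),
      x.submodule ≤ (⨆ i : Fin n, (stdPt i.castSucc).submodule) ↔
      (F x).submodule ≤ (⨆ i : Fin n, (stdPt i.castSucc).submodule))
    (hC : ∀ s : ℙ ℝ (Fin (n + 1) → ℝ), ((∃ i, s = stdPt i) ∨ s = r) →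
      ∀ q x, x.submodule ≤ s.submodule ⊔ q.submodule →
        (F x).submodule ≤ (F s).submodule ⊔ (F q).submodule) :
    IsProjLinear F := by
  have haff : ∀ x : Fin n → ℝ, ∃ y, F (aPt x) = aPt y := by
    intro x
    apply exists_aPt
    rw [← hZ, aPt, le_hyper]
    simp
  choose f hf using haff
  obtain ⟨ρ, rfl⟩ := exists_aPt r hr1
  have hρ : ρ ≠ 0 := by
    rintro rfl; exact hr2 aPt_zero
  have f0 : f 0 = 0 := by
    apply aPt_inj
    rw [← hf, aPt_zero, hF]
  have finj : Function.Injective f := by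
    intro a b hab
    apply aPt_inj
    apply hinj
    rw [hf, hf, hab]
  obtain ⟨d, hd, hfd⟩ := affine hn f finj f0 (by
      intro x i t
      rw [← std_line, ← hf, ← hf, ← hF i.castSucc]
      apply hC _ (Or.inl ⟨_, rfl⟩)
      rw [std_line]
      exact ⟨t, rfl⟩) (by
      intro v t
      have h := hC (aPt 0) (Or.inl ⟨_, aPt_zero⟩) (aPt v) (aPt (t • v))
        ((aPt_line _ _ _).2 ⟨t, by simp⟩)
      rw [hf, hf, hf, aPt_line, f0] at h
      simpa using h) ρ hρ (by
      intro v t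
      have h := hC (aPt ρ) (Or.inr rfl) (aPt (ρ + v)) (aPt (ρ + t • v))
        ((aPt_line _ _ _).2 ⟨t, by simp⟩)
      rwa [hf, hf, hf, aPt_line] at h)
  let D : Fin (n + 1) → ℝ := aVec d
  have hD : ∀ i, D i ≠ 0 := by
    intro i
    refine Fin.lastCases ?_ (fun k => ?_) i
    · simp [D]
    · simpa [D] using hd k
  let A : (Fin (n + 1) → ℝ) ≃ₗ[ℝ] (Fin (n + 1) → ℝ) :=
    LinearEquiv.piCongrRight (fun i => LinearEquiv.smulOfNeZero ℝ ℝ (D i) (hD i))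
  have hA : ∀ v i, A v i = D i * v i := fun v i => rfl
  have hAa : ∀ x, A (aVec x) = aVec (f x) := by
    intro x
    ext k
    rw [hA]
    refine Fin.lastCases ?_ (fun k => ?_) k
    · simp [D]
    · simp [D, hfd]
  refine ⟨A, funext fun q => ?_⟩
  by_cases hq : q.submodule ≤ (⨆ i : Fin n, (stdPt i.castSucc).submodule)
  · induction q using Projectivization.ind with
    | h v hv =>
      have hFq := (hZ _).1 hq
      rw [le_hyper] at hq
      let x : Fin n → ℝ := fun i => v i.castSucc
      have hx : v = (-1 : ℝ) • (Pi.single (Fin.last n) 1 : Fin (n + 1) → ℝ) + (1 : ℝ) • aVec x := by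
        ext k
        refine Fin.lastCases ?_ (fun k => ?_) k
        · simp [hq]
        · simp [x, Fin.castSucc_ne_last, Pi.single_apply]
      have h := hC (stdPt (Fin.last n)) (Or.inl ⟨_, rfl⟩) (aPt x) (Projectivization.mk ℝ v hv)
        ((sub_le_pair _ _ _ _ _ _).2 ⟨-1, 1, hx.symm⟩)
      rw [hF, hf] at h
      rw [Projectivization.map_mk]
      obtain ⟨w, hw, hFw⟩ : ∃ w, ∃ hw : w ≠ 0, F (Projectivization.mk ℝ v hv) =
          Projectivization.mk ℝ w hw := ⟨_, _, (Projectivization.mk_rep _).symm⟩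
      rw [hFw] at h hFq ⊢
      rw [le_hyper] at hFq
      rw [stdPt, aPt, sub_le_pair] at h
      obtain ⟨α, β, h⟩ := h
      have h1 := congrFun h (Fin.last n)
      simp [hFq] at h1
      rw [Projectivization.mk_eq_mk_iff']
      refine ⟨β, ?_⟩
      rw [← h]
      ext k
      rw [← hAa]
      simp only [Pi.smul_apply, Pi.add_apply, LinearEquiv.coe_coe, hA, smul_eq_mul]
      refine Fin.lastCases ?_ (fun k => ?_) k
      · simp [hq, D, h1]
      · simp [x, Fin.castSucc_ne_last, Pi.single_apply]
  · obtain ⟨x, rfl⟩ := exists_aPt q hq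
    rw [hf]
    simp only [aPt]
    rw [Projectivization.map_mk]
    simp only [LinearEquiv.coe_coe, hAa]

lemma pt_eq_of_le {V : Type*} [AddCommGroup V] [Module ℝ V] (x y : ℙ ℝ V)
    (h : x.submodule ≤ y.submodule) : x = y := by
  apply Projectivization.submodule_injective
  exact Submodule.eq_of_le_of_finrank_eq h (by
    rw [Projectivization.finrank_submodule, Projectivization.finrank_submodule])

lemma finrank_join {V : Type*} [AddCommGroup V] [Module ℝ V] (x y : ℙ ℝ V) (h : x ≠ y) :
    Module.finrank ℝ (x.submodule ⊔ y.submodule : Submodule ℝ V) = 2 := by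
  have h1 := Submodule.finrank_sup_add_finrank_inf_eq x.submodule y.submodule
  rw [Projectivization.finrank_submodule, Projectivization.finrank_submodule] at h1
  have h2 : Module.finrank ℝ (x.submodule ⊓ y.submodule : Submodule ℝ V) = 0 := by
    by_contra h3
    have h4 : Module.finrank ℝ (x.submodule ⊓ y.submodule : Submodule ℝ V) = 1 := by
      have := Submodule.finrank_mono (inf_le_left : x.submodule ⊓ y.submodule ≤ x.submodule)
      rw [Projectivization.finrank_submodule] at this
      omega
    have h5 : x.submodule ⊓ y.submodule = x.submodule :=
      Submodule.eq_of_le_of_finrank_eq inf_le_left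
        (by rw [h4, Projectivization.finrank_submodule])
    exact h (pt_eq_of_le x y (inf_eq_left.1 h5))
  omega

lemma line_image {n : ℕ} (F : ℙ ℝ (Fin (n + 1) → ℝ) → ℙ ℝ (Fin (n + 1) → ℝ))
    (hinj : Function.Injective F) (s q : ℙ ℝ (Fin (n + 1) → ℝ)) (hsq : s ≠ q)
    (hl : ∀ l : Set (ℙ ℝ (Fin (n + 1) → ℝ)), IsProjLine l → s ∈ l → IsProjLine (F '' l)) :
    F '' {x | x.submodule ≤ s.submodule ⊔ q.submodule} =
      {y | y.submodule ≤ (F s).submodule ⊔ (F q).submodule} := by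
  obtain ⟨W, hW, hWl⟩ := hl {x | x.submodule ≤ s.submodule ⊔ q.submodule}
    ⟨_, finrank_join s q hsq, rfl⟩ (Set.mem_ofPred.2 le_sup_left)
  have h1 : (F s).submodule ≤ W := by
    have : F s ∈ {p : ℙ ℝ (Fin (n + 1) → ℝ) | p.submodule ≤ W} := by
      rw [← hWl]; exact ⟨s, Set.mem_ofPred.2 le_sup_left, rfl⟩
    exact this
  have h2 : (F q).submodule ≤ W := by
    have : F q ∈ {p : ℙ ℝ (Fin (n + 1) → ℝ) | p.submodule ≤ W} := by
      rw [← hWl]; exact ⟨q, Set.mem_ofPred.2 le_sup_right, rfl⟩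
    exact this
  have h3 : (F s).submodule ⊔ (F q).submodule = W :=
    Submodule.eq_of_le_of_finrank_eq (sup_le h1 h2)
      (by rw [hW, finrank_join _ _ (hinj.ne hsq)])
  rw [hWl, h3]

lemma join_cases {V : Type*} [AddCommGroup V] [Module ℝ V] (x s : ℙ ℝ V) (W : Submodule ℝ V)
    (h : x.submodule ≤ s.submodule ⊔ W) :
    x = s ∨ ∃ q : ℙ ℝ V, q.submodule ≤ W ∧ x.submodule ≤ s.submodule ⊔ q.submodule := by
  have hx : x.rep ∈ s.submodule ⊔ W := by
    apply h; rw [Projectivization.submodule_eq]; exact Submodule.mem_span_singleton_self _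
  obtain ⟨a, ha, w, hw, haw⟩ := Submodule.mem_sup.1 hx
  by_cases hw0 : w = 0
  · left
    apply pt_eq_of_le
    rw [Projectivization.submodule_eq x, Submodule.span_singleton_le_iff_mem, ← haw, hw0, add_zero]
    exact ha
  · right
    refine ⟨Projectivization.mk ℝ w hw0, ?_, ?_⟩
    · rwa [Projectivization.submodule_mk, Submodule.span_singleton_le_iff_mem]
    · rw [Projectivization.submodule_eq x, Submodule.span_singleton_le_iff_mem, ← haw]
      exact Submodule.add_mem_sup ha (Submodule.mem_span_singleton_self _)

lemma pt_not_le_bot {V : Type*} [AddCommGroup V] [Module ℝ V] (x : ℙ ℝ V) :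
    ¬ x.submodule ≤ ⊥ := by
  intro h
  have := x.finrank_submodule
  rw [le_bot_iff.1 h] at this
  simp at this

lemma span_image {V : Type*} [AddCommGroup V] [Module ℝ V] {ι : Type*} [DecidableEq ι]
    (F : ℙ ℝ V → ℙ ℝ V) (p : ι → ℙ ℝ V)
    (hp : iSupIndep (fun i => (p i).submodule))
    (hL : ∀ i q, p i ≠ q → F '' {x | x.submodule ≤ (p i).submodule ⊔ q.submodule} =
      {y | y.submodule ≤ (F (p i)).submodule ⊔ (F q).submodule}) (I : Finset ι) :
    F '' {x | x.submodule ≤ ⨆ i ∈ I, (p i).submodule} =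
      {y | y.submodule ≤ ⨆ i ∈ I, (F (p i)).submodule} := by
  induction I using Finset.induction_on with
  | empty =>
    ext y
    simp only [Finset.notMem_empty, iSup_false, iSup_bot, pt_not_le_bot, Set.mem_image,
      Set.mem_ofPred_eq, false_and, exists_false]
  | insert j I hj ih =>
    have hjI : ∀ q : ℙ ℝ V, q.submodule ≤ ⨆ i ∈ I, (p i).submodule → p j ≠ q := by
      rintro q hq rfl
      apply pt_not_le_bot (p j)
      refine (hp j) le_rfl (hq.trans ?_)
      refine iSup₂_le fun i hi => ?_
      exact le_iSup₂_of_le i (fun h => hj (h ▸ hi)) le_rfl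
    simp only [Finset.iSup_insert]
    ext y
    constructor
    · rintro ⟨x, hx, rfl⟩
      rcases join_cases _ _ _ hx with rfl | ⟨q, hq, hxq⟩
      · exact Set.mem_ofPred.2 le_sup_left
      · have h1 : F x ∈ {y | y.submodule ≤ (F (p j)).submodule ⊔ (F q).submodule} := by
          rw [← hL j q (hjI q hq)]; exact ⟨x, hxq, rfl⟩
        have h2 : F q ∈ {y | y.submodule ≤ ⨆ i ∈ I, (F (p i)).submodule} := by
          rw [← ih]; exact ⟨q, hq, rfl⟩
        exact Set.mem_ofPred.2 (le_trans (Set.mem_ofPred.1 h1) (sup_le_sup_left (Set.mem_ofPred.1 h2) _))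
    · intro hy
      rcases join_cases _ _ _ hy with rfl | ⟨q', hq, hxq⟩
      · exact ⟨p j, Set.mem_ofPred.2 le_sup_left, rfl⟩
      · have h2 : q' ∈ {y | y.submodule ≤ ⨆ i ∈ I, (F (p i)).submodule} := hq
        rw [← ih] at h2
        obtain ⟨q, hq2, rfl⟩ := h2
        have h1 : y ∈ {y | y.submodule ≤ (F (p j)).submodule ⊔ (F q).submodule} := hxq
        rw [← hL j q (hjI q hq2)] at h1
        obtain ⟨x, hx, rfl⟩ := h1
        exact ⟨x, Set.mem_ofPred.2 (le_trans (Set.mem_ofPred.1 hx) (sup_le_sup_left (Set.mem_ofPred.1 hq2) _)), rfl⟩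

lemma sub_map {V : Type*} [AddCommGroup V] [Module ℝ V] (A : V ≃ₗ[ℝ] V) (x : ℙ ℝ V) :
    (Projectivization.map (A : V →ₗ[ℝ] V) A.injective x).submodule =
      x.submodule.map (A : V →ₗ[ℝ] V) := by
  induction x using Projectivization.ind with
  | h v hv =>
    rw [Projectivization.map_mk, Projectivization.submodule_mk, Projectivization.submodule_mk,
      Submodule.map_span, Set.image_singleton]

lemma map_symm_map {V : Type*} [AddCommGroup V] [Module ℝ V] (A : V ≃ₗ[ℝ] V) (x : ℙ ℝ V) :
    Projectivization.map (A.symm : V →ₗ[ℝ] V) A.symm.injective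
      (Projectivization.map (A : V →ₗ[ℝ] V) A.injective x) = x := by
  induction x using Projectivization.ind with
  | h v hv => simp [Projectivization.map_mk]

lemma map_map_symm {V : Type*} [AddCommGroup V] [Module ℝ V] (A : V ≃ₗ[ℝ] V) (x : ℙ ℝ V) :
    Projectivization.map (A : V →ₗ[ℝ] V) A.injective
      (Projectivization.map (A.symm : V →ₗ[ℝ] V) A.symm.injective x) = x := by
  induction x using Projectivization.ind with
  | h v hv => simp [Projectivization.map_mk]

lemma exists_frame {n : ℕ} (p : Fin (n + 1) → ℙ ℝ (Fin (n + 1) → ℝ))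
    (hp : LinearIndependent ℝ (fun i => (p i).rep)) :
    ∃ A : (Fin (n + 1) → ℝ) ≃ₗ[ℝ] (Fin (n + 1) → ℝ), ∀ i,
      Projectivization.map (A : (Fin (n + 1) → ℝ) →ₗ[ℝ] (Fin (n + 1) → ℝ)) A.injective
        (stdPt i) = p i := by
  let b := basisOfLinearIndependentOfCardEqFinrank hp (by simp)
  refine ⟨(Pi.basisFun ℝ (Fin (n + 1))).equiv b (Equiv.refl _), fun i => ?_⟩
  have : ((Pi.basisFun ℝ (Fin (n + 1))).equiv b (Equiv.refl _)) (Pi.single i 1) = (p i).rep := by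
    rw [← Pi.basisFun_apply, Module.Basis.equiv_apply]
    simp [b]
  rw [stdPt, Projectivization.map_mk]
  simp only [LinearEquiv.coe_coe, this, Projectivization.mk_rep]

/-- **Theorem (fundamental theorem of projective geometry, n+2 points, generic case).**
Let `n ≥ 2`, let `p̄₁,…,p̄_{n+1} ∈ ℝPⁿ` be in general position and let `p̄_{n+2} = r`
satisfy `r ∉ s̄p{p̄₁,…,p̄ₙ}` and `r ≠ p̄_{n+1}`. If `F : ℝPⁿ → ℝPⁿ` is injective and
maps every projective line through one of `p̄₁,…,p̄_{n+2}` onto a projective line,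
then `F` is projective-linear. -/
theorem projective_linear_of_nPlusTwo_generic_points
    {n : ℕ} (hn : 2 ≤ n)
    (p : Fin (n + 1) → ℙ ℝ (Fin (n + 1) → ℝ))
    (hp : LinearIndependent ℝ (fun i => (p i).rep))
    (r : ℙ ℝ (Fin (n + 1) → ℝ))
    (hr1 : ¬ r.submodule ≤ ⨆ i : Fin n, (p i.castSucc).submodule)
    (hr2 : r ≠ p (Fin.last n))
    (F : ℙ ℝ (Fin (n + 1) → ℝ) → ℙ ℝ (Fin (n + 1) → ℝ))
    (hinj : Function.Injective F)
    (hline : ∀ l : Set (ℙ ℝ (Fin (n + 1) → ℝ)), IsProjLine l →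
      ((∃ i, p i ∈ l) ∨ r ∈ l) → IsProjLine (F '' l)) :
    IsProjLinear F := by
  classical
  have hL : ∀ s : ℙ ℝ (Fin (n + 1) → ℝ), ((∃ i, s = p i) ∨ s = r) → ∀ q, s ≠ q →
      F '' {x | x.submodule ≤ s.submodule ⊔ q.submodule} =
      {y | y.submodule ≤ (F s).submodule ⊔ (F q).submodule} := by
    intro s hs q hsq
    apply line_image F hinj s q hsq
    intro l hl hsl
    apply hline l hl
    rcases hs with ⟨i, rfl⟩ | rfl
    · exact Or.inl ⟨i, hsl⟩
    · exact Or.inr hsl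
  have hC : ∀ s : ℙ ℝ (Fin (n + 1) → ℝ), ((∃ i, s = p i) ∨ s = r) →
      ∀ q x, x.submodule ≤ s.submodule ⊔ q.submodule →
        (F x).submodule ≤ (F s).submodule ⊔ (F q).submodule := by
    intro s hs q x hx
    by_cases hsq : s = q
    · subst hsq
      rw [sup_idem] at hx
      rw [pt_eq_of_le _ _ hx]
      exact le_sup_left
    · have : F x ∈ {y | y.submodule ≤ (F s).submodule ⊔ (F q).submodule} := by
        rw [← hL s hs q hsq]; exact ⟨x, hx, rfl⟩
      exact this
  have hind : iSupIndep (fun i => (p i).submodule) :=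
    Projectivization.independent_iff_iSupIndep.1 (Projectivization.independent_iff.2 hp)
  have hS := span_image F p hind (fun i q h => hL (p i) (Or.inl ⟨i, rfl⟩) q h)
  have hS' : ∀ (I : Finset (Fin (n + 1))) x, x.submodule ≤ (⨆ i ∈ I, (p i).submodule) ↔
      (F x).submodule ≤ ⨆ i ∈ I, (F (p i)).submodule := by
    intro I x
    have h1 : F x ∈ F '' {x | x.submodule ≤ ⨆ i ∈ I, (p i).submodule} ↔
        F x ∈ {y | y.submodule ≤ ⨆ i ∈ I, (F (p i)).submodule} := by rw [hS I]
    rw [hinj.mem_set_image] at h1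
    exact h1
  have hFp : LinearIndependent ℝ (fun i => (F (p i)).rep) := by
    rw [linearIndependent_iff_notMem_span]
    intro j hj
    have h1 : (F (p j)).submodule ≤ ⨆ i ∈ Finset.univ.erase j, (F (p i)).submodule := by
      rw [Projectivization.submodule_eq (F (p j)), Submodule.span_singleton_le_iff_mem]
      refine (Submodule.span_le.2 ?_) hj
      rintro _ ⟨i, hi, rfl⟩
      have hi' : i ∈ Finset.univ.erase j := by simpa using hi
      refine (le_iSup₂_of_le (f := fun i (_ : i ∈ Finset.univ.erase j) => (F (p i)).submodule)
        i hi' le_rfl) ?_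
      rw [Projectivization.submodule_eq]
      exact Submodule.mem_span_singleton_self _
    rw [← hS'] at h1
    apply pt_not_le_bot (p j)
    refine (hind j) le_rfl (h1.trans ?_)
    refine iSup₂_le fun i hi => ?_
    exact le_iSup₂_of_le i (Finset.ne_of_mem_erase hi) le_rfl
  have hsup : ∀ f : Fin (n + 1) → Submodule ℝ (Fin (n + 1) → ℝ),
      (⨆ i ∈ Finset.univ.erase (Fin.last n), f i) = ⨆ i : Fin n, f i.castSucc := by
    intro f
    apply le_antisymm
    · refine iSup₂_le fun i hi => ?_
      have hne := Finset.ne_of_mem_erase hi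
      obtain ⟨k, rfl⟩ := Fin.exists_castSucc_eq.2 hne
      exact le_iSup (fun i : Fin n => f i.castSucc) k
    · refine iSup_le fun i => ?_
      exact le_iSup₂_of_le i.castSucc (by simp [Fin.castSucc_ne_last]) le_rfl
  have hZ := hS' (Finset.univ.erase (Fin.last n))
  simp only [hsup (fun i => (p i).submodule), hsup (fun i => (F (p i)).submodule)] at hZ
  obtain ⟨A, hA⟩ := exists_frame p hp
  obtain ⟨B, hB⟩ := exists_frame (fun i => F (p i)) hFp
  have hle : ∀ (A : (Fin (n + 1) → ℝ) ≃ₗ[ℝ] (Fin (n + 1) → ℝ))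
      (U W : Submodule ℝ (Fin (n + 1) → ℝ)),
      U.map (A : (Fin (n + 1) → ℝ) →ₗ[ℝ] (Fin (n + 1) → ℝ)) ≤ W.map (A : _ →ₗ[ℝ] _) ↔ U ≤ W :=
    fun A U W => Submodule.map_le_map_iff_of_injective A.injective U W
  set mA := Projectivization.map (A : (Fin (n + 1) → ℝ) →ₗ[ℝ] (Fin (n + 1) → ℝ)) A.injective
    with hmA
  set mB := Projectivization.map (B : (Fin (n + 1) → ℝ) →ₗ[ℝ] (Fin (n + 1) → ℝ)) B.injective
    with hmB
  have sA : ∀ x, (mA x).submodule = x.submodule.map (A : _ →ₗ[ℝ] _) := sub_map A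
  have sB : ∀ x, (mB x).submodule = x.submodule.map (B : _ →ₗ[ℝ] _) := sub_map B
  obtain ⟨r', hr'⟩ : ∃ r', mA r' = r := ⟨_, map_map_symm A r⟩
  let G : ℙ ℝ (Fin (n + 1) → ℝ) → ℙ ℝ (Fin (n + 1) → ℝ) := fun x =>
    Projectivization.map (B.symm : (Fin (n + 1) → ℝ) →ₗ[ℝ] (Fin (n + 1) → ℝ)) B.symm.injective
      (F (mA x))
  have hG : ∀ x, mB (G x) = F (mA x) := fun x => map_map_symm B _
  have mAinj : Function.Injective mA := Projectivization.map_injective _ _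
  have mBinj : Function.Injective mB := Projectivization.map_injective _ _
  have hyA : (⨆ i : Fin n, (p i.castSucc).submodule) =
      (⨆ i : Fin n, (stdPt i.castSucc).submodule).map (A : _ →ₗ[ℝ] _) := by
    rw [Submodule.map_iSup]; simp only [← sA, hA]
  have hyB : (⨆ i : Fin n, (F (p i.castSucc)).submodule) =
      (⨆ i : Fin n, (stdPt i.castSucc).submodule).map (B : _ →ₗ[ℝ] _) := by
    rw [Submodule.map_iSup]; simp only [← sB, hB]
  obtain ⟨D, hD⟩ := normalized hn r'
    (by rwa [← hr', sA, hyA, hle] at hr1)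
    (by rintro rfl; exact hr2 (by rw [← hr', hA]))
    G
    (by
      intro x y hxy
      apply mAinj
      apply hinj
      rw [← hG, ← hG, hxy])
    (by
      intro i
      apply mBinj
      rw [hG, hA, hB])
    (by
      intro x
      have := hZ (mA x)
      rwa [← hG, sA, sB, hyA, hyB, hle, hle] at this)
    (by
      intro s hs q x hx
      have h := hC (mA s) (by
        rcases hs with ⟨i, rfl⟩ | rfl
        · exact Or.inl ⟨i, hA i⟩
        · exact Or.inr hr') (mA q) (mA x)
        (by rwa [sA, sA, sA, ← Submodule.map_sup, hle])
      rwa [← hG, ← hG, ← hG, sB, sB, sB, ← Submodule.map_sup, hle] at h)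
  refine ⟨A.symm.trans (D.trans B), funext fun y => ?_⟩
  obtain ⟨x, rfl⟩ : ∃ x, mA x = y := ⟨_, map_map_symm A y⟩
  rw [← hG, hD, hmA, hmB]
  induction x using Projectivization.ind with
  | h v hv => simp [Projectivization.map_mk]
end

section
/- Let F : ℝ² → ℝ² be an injection that maps each line in ℒ(e₁, e₂) onto a line. Then there exist linearly independent vectors u₁, u₂ ∈ ℝ² and bijections f, g : ℝ → ℝ with f(0) = g(0) = 0 and f(1) = g(1) = 1, such that for all s, t ∈ ℝ, F(se₁ + te₂) − F(0) = f(s)u₁ + g(t)u₂. -/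
/-- Planar determinant. -/
def pdet (x y : Fin 2 → ℝ) : ℝ := x 0 * y 1 - x 1 * y 0

lemma exists_smul_of_pdet {b u : Fin 2 → ℝ} (hu : u ≠ 0) (h : pdet b u = 0) :
    ∃ c : ℝ, b = c • u := by
  unfold pdet at h
  by_cases h0 : u 0 = 0
  · have h1 : u 1 ≠ 0 := by
      intro h1
      apply hu
      ext i
      fin_cases i <;> simp [h0, h1]
    refine ⟨b 1 / u 1, ?_⟩
    have hb : b 0 = 0 := by
      rw [h0] at h
      simpa [h1] using h
    ext i
    fin_cases i
    · simp [h0, hb]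
    · simp [h1]
  · refine ⟨b 0 / u 0, ?_⟩
    ext i
    fin_cases i
    · simp [h0]
    · simp
      field_simp
      linarith

lemma lines_meet (a b a' b' : Fin 2 → ℝ) (h : pdet b b' ≠ 0) :
    ∃ r r' : ℝ, a + r • b = a' + r' • b' := by
  refine ⟨pdet (a' - a) b' / pdet b b', pdet (a' - a) b / pdet b b', ?_⟩
  have hI := mul_inv_cancel₀ h
  rw [div_eq_mul_inv, div_eq_mul_inv]
  generalize (pdet b b')⁻¹ = I at hI
  unfold pdet at *
  ext i
  fin_cases i
  · simp
    linear_combination (a' 0 - a 0) * hI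
  · simp
    linear_combination (a' 1 - a 1) * hI

lemma rows_parallel (H : ℝ → ℝ → (Fin 2 → ℝ))
    (hinj : ∀ s t s' t', H s t = H s' t' → s = s' ∧ t = t')
    (hl : ∀ t, IsLine (Set.range fun s => H s t)) :
    ∃ u : Fin 2 → ℝ, u ≠ 0 ∧ (∀ s t, ∃ r : ℝ, H s t = H 0 t + r • u) ∧
      ∀ r : ℝ, ∃ s, H s 0 = H 0 0 + r • u := by
  choose a b hb hab using hl
  have hmem : ∀ s t, ∃ r : ℝ, H s t = a t + r • b t := by
    intro s t
    have : H s t ∈ lineThru (a t) (b t) := by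
      rw [← hab t]
      exact ⟨s, rfl⟩
    exact this
  have hsur : ∀ t (r : ℝ), ∃ s, H s t = a t + r • b t := by
    intro t r
    have : a t + r • b t ∈ Set.range fun s => H s t := by
      rw [hab t]
      exact ⟨r, rfl⟩
    exact this
  have hpar : ∀ t, ∃ c : ℝ, b t = c • b 0 := by
    intro t
    by_cases ht : t = 0
    · exact ⟨1, by simp [ht]⟩
    · apply exists_smul_of_pdet (hb 0)
      by_contra hd
      obtain ⟨r, r', hr⟩ := lines_meet (a t) (b t) (a 0) (b 0) hd
      obtain ⟨s, hs⟩ := hsur t r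
      obtain ⟨s', hs'⟩ := hsur 0 r'
      exact ht (hinj s t s' 0 (by rw [hs, hs', hr])).2
  refine ⟨b 0, hb 0, ?_, ?_⟩
  · intro s t
    obtain ⟨c, hc⟩ := hpar t
    obtain ⟨r, hr⟩ := hmem s t
    obtain ⟨r', hr'⟩ := hmem 0 t
    refine ⟨(r - r') * c, ?_⟩
    rw [hr, hr', hc]
    module
  · intro r
    obtain ⟨r', hr'⟩ := hmem 0 0
    obtain ⟨s, hs⟩ := hsur 0 (r' + r)
    refine ⟨s, ?_⟩
    rw [hs, hr']
    module

lemma coeff_eq {u v : Fin 2 → ℝ} (hd : pdet u v ≠ 0) {x y x' y' : ℝ}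
    (h : x • u + y • v = x' • u + y' • v) : x = x' ∧ y = y' := by
  have h0 := congrFun h 0
  have h1 := congrFun h 1
  simp at h0 h1
  unfold pdet at hd
  constructor
  · apply mul_right_cancel₀ hd
    linear_combination v 1 * h0 - v 0 * h1
  · apply mul_right_cancel₀ hd
    linear_combination u 0 * h1 - u 1 * h0


/-- **Theorem (plane collineations in two directions have diagonal form).**
If `F : ℝ² → ℝ²` is an injection mapping each line in `ℒ(e₁, e₂)` onto a line, then
there are linearly independent `u₁, u₂ ∈ ℝ²` and bijections `f, g : ℝ → ℝ` with
`f 0 = g 0 = 0`, `f 1 = g 1 = 1`, such that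
`F (s e₁ + t e₂) - F 0 = f s • u₁ + g t • u₂`. -/
theorem plane_collineation_two_directions_diagonal_form
    (F : (Fin 2 → ℝ) → (Fin 2 → ℝ))
    (hinj : Function.Injective F)
    (honto : ∀ (i : Fin 2) (a : Fin 2 → ℝ),
      IsLine (F '' lineThru a (Pi.single i 1 : Fin 2 → ℝ))) :
    ∃ (u₁ u₂ : Fin 2 → ℝ) (f g : ℝ → ℝ),
      LinearIndependent ℝ ![u₁, u₂] ∧
      Function.Bijective f ∧ Function.Bijective g ∧
      f 0 = 0 ∧ g 0 = 0 ∧ f 1 = 1 ∧ g 1 = 1 ∧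
      ∀ s t : ℝ,
        F (s • (Pi.single 0 1 : Fin 2 → ℝ) + t • (Pi.single 1 1 : Fin 2 → ℝ)) - F 0 = f s • u₁ + g t • u₂ := by
  obtain ⟨P, hP⟩ : ∃ P : ℝ → ℝ → (Fin 2 → ℝ), ∀ s t, P s t =
    F (s • (Pi.single 0 1 : Fin 2 → ℝ) + t • (Pi.single 1 1 : Fin 2 → ℝ)) := ⟨_, fun _ _ => rfl⟩
  have hPinj : ∀ s t s' t', P s t = P s' t' → s = s' ∧ t = t' := by
    intro s t s' t' h
    rw [hP, hP] at h
    have h := hinj h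
    have h0 := congrFun h 0
    have h1 := congrFun h 1
    simp at h0 h1
    exact ⟨h0, h1⟩
  have hrow : ∀ t, IsLine (Set.range fun s => P s t) := by
    intro t
    convert honto 0 (t • (Pi.single 1 1 : Fin 2 → ℝ)) using 1
    ext x
    constructor
    · rintro ⟨s, rfl⟩
      exact ⟨_, ⟨s, rfl⟩, by simp only [hP, add_comm]⟩
    · rintro ⟨_, ⟨s, rfl⟩, rfl⟩
      exact ⟨s, by simp only [hP, add_comm]⟩
  have hcol : ∀ s, IsLine (Set.range fun t => P s t) := by
    intro s
    convert honto 1 (s • (Pi.single 0 1 : Fin 2 → ℝ)) using 1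
    ext x
    constructor
    · rintro ⟨t, rfl⟩
      exact ⟨_, ⟨t, rfl⟩, by simp only [hP]⟩
    · rintro ⟨_, ⟨t, rfl⟩, rfl⟩
      exact ⟨t, by simp only [hP]⟩
  obtain ⟨u, hu, hu1, hu2⟩ := rows_parallel P hPinj hrow
  obtain ⟨v, hv, hv1, hv2⟩ := rows_parallel (fun t s => P s t)
    (fun s t s' t' h => (hPinj t s t' s' h).symm) hcol
  have hd : pdet u v ≠ 0 := by
    intro hd
    obtain ⟨c, hc⟩ := exists_smul_of_pdet (b := v) hu (by unfold pdet at *; linarith)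
    obtain ⟨r, hr⟩ := hv1 1 0
    obtain ⟨s, hs⟩ := hu2 (r * c)
    have := (hPinj 0 1 s 0 (by rw [hs]; rw [hr, hc, smul_smul])).2
    exact one_ne_zero this
  choose α hα using fun s => hu1 s 0
  choose β hβ using fun t => hv1 t 0
  have key : ∀ s t, P s t = P 0 0 + α s • u + β t • v := by
    intro s t
    obtain ⟨r, hr⟩ := hu1 s t
    obtain ⟨r', hr'⟩ := hv1 t s
    rw [hβ t] at hr
    rw [hα s] at hr'
    have h2 : r • u + β t • v = α s • u + r' • v := by
      have h3 := hr.symm.trans hr'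
      rw [add_assoc, add_assoc] at h3
      rw [← add_left_cancel h3, add_comm]
    rw [hr', ← (coeff_eq hd h2).2]
  have hα0 : α 0 = 0 := by
    have := hα 0
    simpa [hu] using this
  have hβ0 : β 0 = 0 := by
    have := hβ 0
    simpa [hv] using this
  have hαi : Function.Injective α := fun s s' h =>
    (hPinj s 0 s' 0 (by rw [hα s, hα s', h])).1
  have hβi : Function.Injective β := fun s s' h =>
    (hPinj 0 s 0 s' (by rw [hβ s, hβ s', h])).2
  have hαs : Function.Surjective α := by
    intro r
    obtain ⟨s, hs⟩ := hu2 r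
    refine ⟨s, smul_left_injective ℝ hu (add_left_cancel ((hα s).symm.trans hs))⟩
  have hβs : Function.Surjective β := by
    intro r
    obtain ⟨s, hs⟩ := hv2 r
    refine ⟨s, smul_left_injective ℝ hv (add_left_cancel ((hβ s).symm.trans hs))⟩
  have hα1 : α 1 ≠ 0 := fun h => one_ne_zero (hαi (h.trans hα0.symm))
  have hβ1 : β 1 ≠ 0 := fun h => one_ne_zero (hβi (h.trans hβ0.symm))
  have hbij : ∀ c : ℝ, c ≠ 0 → Function.Bijective (fun x : ℝ => x / c) := fun c hc =>
    ⟨fun x y h => by simpa [hc, div_left_inj'] using h, fun y => ⟨y * c, by simp [hc]⟩⟩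
  refine ⟨α 1 • u, β 1 • v, fun s => α s / α 1, fun t => β t / β 1, ?_,
    (hbij _ hα1).comp ⟨hαi, hαs⟩, (hbij _ hβ1).comp ⟨hβi, hβs⟩, by simp [hα0], by simp [hβ0],
    by simp [hα1], by simp [hβ1], ?_⟩
  · rw [LinearIndependent.pair_iff]
    intro x y h
    rw [smul_smul, smul_smul] at h
    have := coeff_eq (x' := 0) (y' := 0) hd (by rw [h]; simp)
    simpa [hα1, hβ1] using this
  · intro s t
    have h00 : F 0 = P 0 0 := by rw [hP]; simp
    rw [← hP, h00, key, smul_smul, smul_smul, div_mul_cancel₀ _ hα1, div_mul_cancel₀ _ hβ1]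
    abel
end

section
/- Let n ≥ 2 and let F : ℝ² → ℝⁿ be an injective mapping that maps each line in ℒ(e₁, e₂) onto a line. Then there exist linearly independent vectors u₁, u₂ ∈ ℝⁿ, a vector u₃ ∈ ℝⁿ, and bijections f, g : ℝ → ℝ with f(0) = g(0) = 0 and f(1) = g(1) = 1, such that for all s, t ∈ ℝ, F(se₁ + te₂) − F(0) = f(s)u₁ + g(t)u₂ + f(s)g(t)u₃. -/
lemma line_param_s8 {n : ℕ} (φ : ℝ → (Fin n → ℝ)) (hφ : Function.Injective φ)
    (a b : Fin n → ℝ) (hr : ∀ x, (∃ s, φ s = x) ↔ ∃ c : ℝ, x = a + c • b) :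
    ∃ f : ℝ → ℝ, Function.Bijective f ∧ f 0 = 0 ∧ f 1 = 1 ∧
      ∀ s, φ s = φ 0 + f s • (φ 1 - φ 0) := by
  have h1 : ∀ s, ∃ c : ℝ, φ s = a + c • b := fun s => (hr _).1 ⟨s, rfl⟩
  choose c hc using h1
  have hcinj : Function.Injective c := by
    intro x y hxy
    apply hφ
    rw [hc x, hc y, hxy]
  have hne : c 1 - c 0 ≠ 0 := by
    intro h
    exact one_ne_zero (hcinj (sub_eq_zero.1 h))
  have hb : b ≠ 0 := by
    intro h
    apply one_ne_zero (α := ℝ)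
    apply hφ
    rw [hc 1, hc 0, h]; simp
  refine ⟨fun s => (c s - c 0) / (c 1 - c 0), ⟨?_, ?_⟩, by simp, by simp [hne], ?_⟩
  · intro x y hxy
    apply hcinj
    simp only at hxy
    field_simp at hxy
    linarith
  · intro y
    obtain ⟨s, hs⟩ := (hr (a + (c 0 + y * (c 1 - c 0)) • b)).2 ⟨_, rfl⟩
    refine ⟨s, ?_⟩
    rw [hc s] at hs
    have := smul_left_injective ℝ hb (add_left_cancel hs)
    simp only [this]
    field_simp
    ring
  · intro s
    have e : φ 1 - φ 0 = (c 1 - c 0) • b := by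
      rw [hc 1, hc 0]; module
    rw [e, smul_smul, div_mul_cancel₀ _ hne, hc s, hc 0]
    module

lemma core_s8 {n : ℕ} (G : ℝ → ℝ → (Fin n → ℝ)) (h00 : G 0 0 = 0)
    (hinj : ∀ s t s' t', G s t = G s' t' → s = s' ∧ t = t')
    (hA : ∀ t, ∃ f : ℝ → ℝ, Function.Bijective f ∧ f 0 = 0 ∧ f 1 = 1 ∧
      ∀ s, G s t = G 0 t + f s • (G 1 t - G 0 t))
    (hB : ∀ s, ∃ f : ℝ → ℝ, Function.Bijective f ∧ f 0 = 0 ∧ f 1 = 1 ∧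
      ∀ t, G s t = G s 0 + f t • (G s 1 - G s 0)) :
    ∃ (u₁ u₂ u₃ : Fin n → ℝ) (f g : ℝ → ℝ),
      LinearIndependent ℝ ![u₁, u₂] ∧
      Function.Bijective f ∧ Function.Bijective g ∧
      f 0 = 0 ∧ g 0 = 0 ∧ f 1 = 1 ∧ g 1 = 1 ∧
      ∀ s t : ℝ, G s t = f s • u₁ + g t • u₂ + (f s * g t) • u₃ := by
  choose A hAb hA0 hA1 hA using hA
  choose B hBb hB0 hB1 hB using hB
  obtain ⟨u₁, hu₁⟩ : ∃ u, u = G 1 0 := ⟨_, rfl⟩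
  obtain ⟨u₂, hu₂⟩ : ∃ u, u = G 0 1 := ⟨_, rfl⟩
  obtain ⟨u₃, hu₃⟩ : ∃ u, u = G 1 1 - u₁ - u₂ := ⟨_, rfl⟩
  have h11 : G 1 1 = u₁ + u₂ + u₃ := by rw [hu₃]; abel
  have es0 : ∀ s, G s 0 = A 0 s • u₁ := by
    intro s; rw [hA 0 s, h00, ← hu₁]; module
  have e0t : ∀ t, G 0 t = B 0 t • u₂ := by
    intro t; rw [hB 0 t, h00, ← hu₂]; module
  have es1 : ∀ s, G s 1 = u₂ + A 1 s • (u₁ + u₃) := by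
    intro s; rw [hA 1 s, ← hu₂, h11]; module
  have e1t : ∀ t, G 1 t = u₁ + B 1 t • (u₂ + u₃) := by
    intro t; rw [hB 1 t, ← hu₁, h11]; module
  have E1 : ∀ s t, G s t = A 0 s • u₁ + B s t • (u₂ + A 1 s • (u₁ + u₃) - A 0 s • u₁) := by
    intro s t; rw [hB s t, es0, es1]
  have E2 : ∀ s t, G s t = B 0 t • u₂ + A t s • (u₁ + B 1 t • (u₂ + u₃) - B 0 t • u₂) := by
    intro s t; rw [hA t s, e0t, e1t]
  have ind : ∀ p q : ℝ, p • u₁ + q • u₂ = 0 → p = 0 ∧ q = 0 := by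
    intro p q h
    obtain ⟨s, hs⟩ := (hAb 0).2 p
    obtain ⟨t, ht⟩ := (hBb 0).2 (-q)
    have : G s 0 = G 0 t := by
      rw [es0, e0t, hs, ht, ← sub_eq_zero, ← h]; module
    obtain ⟨rfl, rfl⟩ := hinj _ _ _ _ this
    rw [hA0] at hs; rw [hB0] at ht
    constructor <;> linarith
  have key : (∀ s, A 1 s = A 0 s) ∧ (∀ t, B 1 t = B 0 t) ∧
      ∀ s t, B s t = B 0 t := by
    by_cases hpl : ∃ a b : ℝ, u₃ = a • u₁ + b • u₂
    · obtain ⟨a, b, hab⟩ := hpl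
      have hb : b = 0 := by
        by_contra hb
        obtain ⟨s, hs⟩ := (hAb 1).2 (-1 / b)
        obtain ⟨s', hs'⟩ := (hAb 0).2 (-1 / b * (1 + a))
        have : G s 1 = G s' 0 := by
          rw [es1, es0, hs, hs', hab]
          have : (-1 / b) * b = -1 := by field_simp
          linear_combination (norm := module) this • u₂
        exact one_ne_zero (hinj _ _ _ _ this).2
      have ha : a = 0 := by
        by_contra ha
        obtain ⟨s, hs⟩ := (hBb 1).2 (-1 / a)
        obtain ⟨s', hs'⟩ := (hBb 0).2 (-1 / a * (1 + b))
        have : G 1 s = G 0 s' := by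
          rw [e1t, e0t, hs, hs', hab]
          have : (-1 / a) * a = -1 := by field_simp
          linear_combination (norm := module) this • u₁
        exact one_ne_zero (hinj _ _ _ _ this).1
      have h3 : u₃ = 0 := by rw [hab, ha, hb]; simp
      have hf : ∀ s, A 1 s = A 0 s := by
        intro s
        by_contra hne
        have hne' : A 0 s - A 1 s ≠ 0 := fun h => hne (by linarith)
        obtain ⟨t, ht⟩ := (hBb s).2 (A 0 s / (A 0 s - A 1 s))
        obtain ⟨t', ht'⟩ := (hBb 0).2 (A 0 s / (A 0 s - A 1 s))
        have : G s t = G 0 t' := by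
          rw [E1, e0t, ht, ht', h3]
          have := div_mul_cancel₀ (A 0 s) hne'
          linear_combination (norm := module) (-this) • u₁
        have := (hinj _ _ _ _ this).1
        subst this
        exact hne (by rw [hA0, hA0])
      have hg : ∀ s, B 1 s = B 0 s := by
        intro s
        by_contra hne
        have hne' : B 0 s - B 1 s ≠ 0 := fun h => hne (by linarith)
        obtain ⟨t, ht⟩ := (hAb s).2 (B 0 s / (B 0 s - B 1 s))
        obtain ⟨t', ht'⟩ := (hAb 0).2 (B 0 s / (B 0 s - B 1 s))
        have : G t s = G t' 0 := by
          rw [E2, es0, ht, ht', h3]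
          have := div_mul_cancel₀ (B 0 s) hne'
          linear_combination (norm := module) (-this) • u₂
        have := (hinj _ _ _ _ this).2
        subst this
        exact hne (by rw [hB0, hB0])
      refine ⟨hf, hg, fun s t => ?_⟩
      have h := E1 s t
      rw [E2 s t, hf, hg, h3] at h
      have := ind (A t s - A 0 s) (B 0 t - B s t) (by linear_combination (norm := module) h)
      linarith [this.2]
    · have ind3 : ∀ p q r : ℝ, p • u₁ + q • u₂ + r • u₃ = 0 → p = 0 ∧ q = 0 ∧ r = 0 := by
        intro p q r h
        have hr : r = 0 := by
          by_contra hr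
          apply hpl
          refine ⟨-p / r, -q / r, ?_⟩
          have h2 : r⁻¹ • (p • u₁ + q • u₂ + r • u₃) = 0 := by rw [h, smul_zero]
          have h1 : r⁻¹ * r = 1 := inv_mul_cancel₀ hr
          rw [div_eq_mul_inv, div_eq_mul_inv]
          linear_combination (norm := module) h2 - h1 • u₃
        subst hr
        have := ind p q (by simpa using h)
        exact ⟨this.1, this.2, rfl⟩
      have co : ∀ s t, A t s = A 0 s + B s t * (A 1 s - A 0 s) ∧
          B s t = B 0 t + A t s * (B 1 t - B 0 t) ∧ B s t * A 1 s = A t s * B 1 t := by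
        intro s t
        have h := E1 s t
        rw [E2 s t] at h
        obtain ⟨h1, h2, h3⟩ := ind3 (A t s - (A 0 s + B s t * (A 1 s - A 0 s)))
          (B 0 t + A t s * (B 1 t - B 0 t) - B s t) (A t s * B 1 t - B s t * A 1 s)
          (by linear_combination (norm := module) h)
        refine ⟨by linarith, by linarith, by linarith⟩
      have rel : ∀ s t, t ≠ 0 → A 0 s * B 1 t * (1 - B 0 t) =
          A 1 s * (A 0 s * (B 1 t - B 0 t) + B 0 t * (1 - B 1 t)) := by
        intro s t ht
        by_cases hs : s = 0
        · subst hs; rw [hA0, hA0]; ring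
        obtain ⟨c1, c2, c3⟩ := co s t
        have hβ : A t s ≠ 0 := fun h => hs ((hAb t).1 (h.trans (hA0 t).symm))
        have d1 : A t s * (A 1 s - B 1 t * A 1 s + B 1 t * A 0 s) = A 0 s * A 1 s := by
          linear_combination A 1 s * c1 + (A 1 s - A 0 s) * c3
        have d2 : A t s * (B 1 t - B 1 t * A 1 s + B 0 t * A 1 s) = B 0 t * A 1 s := by
          linear_combination A 1 s * c2 - c3
        have hh : A 1 s ≠ 0 := fun h => hs ((hAb 1).1 (h.trans (hA0 1).symm))
        apply mul_left_cancel₀ hβ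
        linear_combination A 0 s * d2 - B 0 t * d1
      have hg : ∀ t, B 1 t = B 0 t := by
        intro t
        by_cases ht : t = 0
        · subst ht; rw [hB0, hB0]
        by_cases ht1 : t = 1
        · subst ht1; rw [hB1, hB1]
        by_contra hne
        have hk0 : B 1 t ≠ 0 := fun h => ht ((hBb 1).1 (h.trans (hB0 1).symm))
        have hg0 : B 0 t ≠ 0 := fun h => ht ((hBb 0).1 (h.trans (hB0 0).symm))
        have hk1 : 1 - B 1 t ≠ 0 := fun h => ht1 ((hBb 1).1 (by rw [hB1 1]; linarith))
        have hg1 : 1 - B 0 t ≠ 0 := fun h => ht1 ((hBb 0).1 (by rw [hB1 0]; linarith))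
        have hd : B 1 t - B 0 t ≠ 0 := sub_ne_zero.2 hne
        obtain ⟨s, hs⟩ := (hAb 0).2 (-(B 0 t * (1 - B 1 t)) / (B 1 t - B 0 t))
        have hm : A 0 s * (B 1 t - B 0 t) = -(B 0 t * (1 - B 1 t)) := by
          rw [hs, div_mul_cancel₀ _ hd]
        have h := rel s t ht
        rw [hm, neg_add_cancel, mul_zero] at h
        have hf0 : A 0 s = 0 := by
          simpa [hk0, hg1] using h
        rw [hf0, zero_mul, eq_comm, neg_eq_zero] at hm
        exact mul_ne_zero hg0 hk1 hm
      have hf : ∀ s, A 1 s = A 0 s := by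
        intro s
        have h := rel s 2 two_ne_zero
        have hg0 : B 0 2 ≠ 0 := fun h => two_ne_zero ((hBb 0).1 (h.trans (hB0 0).symm))
        have hg1 : 1 - B 0 2 ≠ 0 := fun h => by
          have : (2 : ℝ) = 1 := (hBb 0).1 (by rw [hB1 0]; linarith)
          norm_num at this
        rw [hg 2] at h
        apply mul_left_cancel₀ (mul_ne_zero hg0 hg1)
        linear_combination -h
      refine ⟨hf, hg, fun s t => ?_⟩
      have := (co s t).2.1
      rw [hg] at this
      linarith
  obtain ⟨hf, hg, hk⟩ := key
  refine ⟨u₁, u₂, u₃, A 0, B 0, LinearIndependent.pair_iff.2 ind, hAb 0, hBb 0,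
    hA0 0, hB0 0, hA1 0, hB1 0, fun s t => ?_⟩
  rw [E1, hf, hk]
  module

/-- **Theorem (collineations of the plane into `ℝⁿ` in two directions).**
If `n ≥ 2` and `F : ℝ² → ℝⁿ` is an injection mapping each line in `ℒ(e₁, e₂)` onto a
line, then there are linearly independent `u₁, u₂ ∈ ℝⁿ`, a vector `u₃ ∈ ℝⁿ`, and
bijections `f, g : ℝ → ℝ` with `f 0 = g 0 = 0`, `f 1 = g 1 = 1`, such that
`F (s e₁ + t e₂) - F 0 = f s • u₁ + g t • u₂ + (f s * g t) • u₃`. -/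
theorem plane_to_Rn_collineation_two_directions
    {n : ℕ} (hn : 2 ≤ n)
    (F : (Fin 2 → ℝ) → (Fin n → ℝ))
    (hinj : Function.Injective F)
    (honto : ∀ (i : Fin 2) (a : Fin 2 → ℝ),
      IsLine (F '' lineThru a (Pi.single i 1 : Fin 2 → ℝ))) :
    ∃ (u₁ u₂ u₃ : Fin n → ℝ) (f g : ℝ → ℝ),
      LinearIndependent ℝ ![u₁, u₂] ∧
      Function.Bijective f ∧ Function.Bijective g ∧
      f 0 = 0 ∧ g 0 = 0 ∧ f 1 = 1 ∧ g 1 = 1 ∧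
      ∀ s t : ℝ,
        F (s • (Pi.single 0 1 : Fin 2 → ℝ) + t • (Pi.single 1 1 : Fin 2 → ℝ)) - F 0 =
          f s • u₁ + g t • u₂ + (f s * g t) • u₃ := by
  have hpt : ∀ s t : ℝ, s • (Pi.single 0 1 : Fin 2 → ℝ) + t • (Pi.single 1 1 : Fin 2 → ℝ)
      = ![s, t] := by
    intro s t; ext i; fin_cases i <;> simp
  have hz : (0 : Fin 2 → ℝ) = ![0, 0] := by ext i; fin_cases i <;> simp
  simp only [hpt]
  have hGi : ∀ s t s' t' : ℝ, F ![s, t] - F 0 = F ![s', t'] - F 0 → s = s' ∧ t = t' := by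
    intro s t s' t' h
    have h := hinj (sub_left_injective h)
    exact ⟨by simpa using congrFun h 0, by simpa using congrFun h 1⟩
  refine core_s8 (fun s t => F ![s, t] - F 0) (by simp [hz]) hGi ?_ ?_
  · intro t
    obtain ⟨a, b, -, h⟩ := honto 0 ![0, t]
    refine line_param_s8 (fun s => F ![s, t] - F 0) (fun x y h => (hGi _ _ _ _ h).1) (a - F 0) b ?_
    intro x
    have h := Set.ext_iff.1 h (x + F 0)
    have e : ∀ s : ℝ, ![0, t] + s • (Pi.single 0 1 : Fin 2 → ℝ) = ![s, t] := by
      intro s; ext i; fin_cases i <;> simp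
    simp only [lineThru, Set.mem_image, Set.mem_setOf_eq, e] at h
    constructor
    · rintro ⟨s, rfl⟩
      obtain ⟨c, hc⟩ := h.1 ⟨_, ⟨s, rfl⟩, by simp⟩
      exact ⟨c, by linear_combination (norm := module) hc⟩
    · rintro ⟨c, hc⟩
      obtain ⟨_, ⟨s, rfl⟩, hs⟩ := h.2 ⟨c, by rw [hc]; abel⟩
      exact ⟨s, by simp [hs]⟩
  · intro t
    obtain ⟨a, b, -, h⟩ := honto 1 ![t, 0]
    refine line_param_s8 (fun s => F ![t, s] - F 0) (fun x y h => (hGi _ _ _ _ h).2) (a - F 0) b ?_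
    intro x
    have h := Set.ext_iff.1 h (x + F 0)
    have e : ∀ s : ℝ, ![t, 0] + s • (Pi.single 1 1 : Fin 2 → ℝ) = ![t, s] := by
      intro s; ext i; fin_cases i <;> simp
    simp only [lineThru, Set.mem_image, Set.mem_setOf_eq, e] at h
    constructor
    · rintro ⟨s, rfl⟩
      obtain ⟨c, hc⟩ := h.1 ⟨_, ⟨s, rfl⟩, by simp⟩
      exact ⟨c, by linear_combination (norm := module) hc⟩
    · rintro ⟨c, hc⟩
      obtain ⟨_, ⟨s, rfl⟩, hs⟩ := h.2 ⟨c, by rw [hc]; abel⟩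
      exact ⟨s, by simp [hs]⟩
end

section
/- Let f : ℝ → ℝ be a bijective function with f(0) = 0 and f(1) = 1. Assume there is a function G : ℝ → ℝ such that (f(a + b) − f(b))/f(a) = G(b) for every a ≠ 0 and every b ∈ ℝ. Then f is additive, i.e., f(a + b) = f(a) + f(b) for all a, b ∈ ℝ. -/
/-- **Lemma (a bijection with constant difference quotients is additive).**
Let `f : ℝ → ℝ` be a bijection with `f 0 = 0` and `f 1 = 1`. If there is a function
`G : ℝ → ℝ` with `(f (a + b) - f b) / f a = G b` for every `a ≠ 0` and every `b`,
then `f` is additive. -/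
theorem additive_of_constant_difference_quotient
    (f : ℝ → ℝ) (hf : Function.Bijective f) (h0 : f 0 = 0) (h1 : f 1 = 1)
    (G : ℝ → ℝ) (hG : ∀ a b : ℝ, a ≠ 0 → (f (a + b) - f b) / f a = G b) :
    ∀ a b : ℝ, f (a + b) = f a + f b := by
  have key : ∀ a b : ℝ, f (a + b) = f b + G b * f a := by
    intro a b
    by_cases ha : a = 0
    · subst ha
      simp [h0]
    · have hfa : f a ≠ 0 := fun h => ha (hf.1 (h.trans h0.symm))
      have h := hG a b ha
      rw [div_eq_iff hfa] at h
      linarith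
  have hGb : ∀ b : ℝ, G b = 1 + (G 1 - 1) * f b := by
    intro b
    have e1 := key 1 b
    have e2 := key b 1
    rw [add_comm b 1] at e2
    rw [h1] at e1 e2
    linarith
  have hc : G 1 - 1 = 0 := by
    by_contra hc
    obtain ⟨b, hb⟩ := hf.2 (-1 / (G 1 - 1))
    have hz : G b = 0 := by
      rw [hGb b, hb]
      field_simp
      ring
    have e := key 1 b
    rw [hz, zero_mul, add_zero] at e
    have := hf.1 e
    linarith
  intro a b
  rw [key a b, hGb b, hc]
  ring
end

section
/- Let n ≥ 2, let v₁, v₂, v₃ ∈ ℝ² be 2-independent (every two of them linearly independent), and let F : ℝ² → ℝⁿ be injective. Assume that F maps each line in ℒ(v₁, v₂, v₃) onto a line. Then F is affine-additive. -/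
/-- A parametrized curve whose range is a line through any two of its points. -/
def LineParam {V : Type*} [AddCommGroup V] [Module ℝ V] (l : ℝ → V) : Prop :=
  ∀ a b : ℝ, a ≠ b → (∀ s, ∃ r : ℝ, l s = l a + r • (l b - l a)) ∧
    (∀ r : ℝ, ∃ s, l s = l a + r • (l b - l a))

theorem lineParam_of_isLine {n : ℕ} (F : (Fin 2 → ℝ) → (Fin n → ℝ))
    (hinj : Function.Injective F) (a w : Fin 2 → ℝ) (hw : w ≠ 0) (k : ℝ) (hk : k ≠ 0)
    (h : IsLine (F '' lineThru a w)) : LineParam (fun s : ℝ => F (a + s • (k • w))) := by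
  obtain ⟨p, d, hd, hS⟩ := h
  have h1 : ∀ s : ℝ, ∃ r : ℝ, F (a + s • (k • w)) = p + r • d := by
    intro s
    have : F (a + s • (k • w)) ∈ F '' lineThru a w := ⟨_, ⟨s * k, by rw [smul_smul]⟩, rfl⟩
    rw [hS] at this
    exact this
  have h2 : ∀ r : ℝ, ∃ s : ℝ, F (a + s • (k • w)) = p + r • d := by
    intro r
    have : p + r • d ∈ lineThru p d := ⟨r, rfl⟩
    rw [← hS] at this
    obtain ⟨x, ⟨t, rfl⟩, hx⟩ := this
    refine ⟨t / k, ?_⟩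
    rw [smul_smul, div_mul_cancel₀ _ hk, hx]
  intro s₀ s₁ hne
  obtain ⟨r₀, h₀⟩ := h1 s₀
  obtain ⟨r₁, h₁⟩ := h1 s₁
  have hr : r₁ - r₀ ≠ 0 := by
    intro h
    have : r₁ = r₀ := by linarith
    rw [this, ← h₀] at h₁
    have h3 := add_left_cancel (hinj h₁)
    have h4 : (s₁ - s₀) • (k • w) = 0 := by rw [sub_smul, h3, sub_self]
    simp only [smul_eq_zero, hk, hw, or_false] at h4
    exact hne (by linarith)
  refine ⟨fun s => ?_, fun r => ?_⟩
  · obtain ⟨r, h⟩ := h1 s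
    refine ⟨(r - r₀) / (r₁ - r₀), ?_⟩
    simp only [h, h₀, h₁]
    have : r = r₀ + (r - r₀) / (r₁ - r₀) * (r₁ - r₀) := by field_simp; ring
    conv_lhs => rw [this]
    module
  · obtain ⟨s, h⟩ := h2 (r₀ + r * (r₁ - r₀))
    refine ⟨s, ?_⟩
    simp only [h, h₀, h₁]
    module

theorem core_three {V : Type*} [AddCommGroup V] [Module ℝ V] (G : ℝ → ℝ → V)
    (hinj : ∀ s t s' t', G s t = G s' t' → s = s' ∧ t = t')
    (hH : ∀ t, LineParam (fun s => G s t)) (hV : ∀ s, LineParam (fun t => G s t))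
    (hD : ∀ c, LineParam (fun x => G x (x + c))) :
    ∃ (u w : V) (f g : ℝ → ℝ), (∀ x y, f (x + y) = f x + f y) ∧
      (∀ x y, g (x + y) = g x + g y) ∧ ∀ s t, G s t = G 0 0 + f s • u + g t • w := by
  obtain ⟨o, ho⟩ : ∃ o, o = G 0 0 := ⟨_, rfl⟩
  obtain ⟨u, hu⟩ : ∃ u, u = G 1 0 - G 0 0 := ⟨_, rfl⟩
  obtain ⟨w, hw⟩ : ∃ w, w = G 0 1 - G 0 0 := ⟨_, rfl⟩
  have L1 : ∀ s, ∃ r : ℝ, G s 0 = o + r • u := by rw [ho, hu]; exact (hH 0 0 1 (by norm_num)).1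
  have L2 : ∀ r : ℝ, ∃ s, G s 0 = o + r • u := by rw [ho, hu]; exact (hH 0 0 1 (by norm_num)).2
  have M1 : ∀ s, ∃ r : ℝ, G 0 s = o + r • w := by rw [ho, hw]; exact (hV 0 0 1 (by norm_num)).1
  have M2 : ∀ r : ℝ, ∃ s, G 0 s = o + r • w := by rw [ho, hw]; exact (hV 0 0 1 (by norm_num)).2
  have u0 : u ≠ 0 := by
    rw [hu, sub_ne_zero]; intro h; simpa using hinj _ _ _ _ h
  have w0 : w ≠ 0 := by
    rw [hw, sub_ne_zero]; intro h; simpa using hinj _ _ _ _ h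
  have ind : ∀ a b a' b' : ℝ, o + a • u + b • w = o + a' • u + b' • w → a = a' ∧ b = b' := by
    intro a b a' b' h
    obtain ⟨s, hs⟩ := L2 (a - a')
    obtain ⟨t, ht⟩ := M2 (b' - b)
    have e : G s 0 = G 0 t := by
      rw [hs, ht, ← sub_eq_zero]
      rw [← sub_eq_zero] at h
      rw [← h]; module
    obtain ⟨rfl, rfl⟩ := hinj _ _ _ _ e
    rw [← ho, left_eq_add, smul_eq_zero] at hs ht
    have := hs.resolve_right u0
    have := ht.resolve_right w0
    constructor <;> linarith
  have P1 : ∀ s t, s ≠ t → ∃ a b : ℝ, G s t = o + a • u + b • w := by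
    intro s t hst
    obtain ⟨r, hr⟩ := (hD (t - s) 0 (-(t - s)) (by
      intro h; apply hst; linarith)).1 s
    simp only [add_sub_cancel, zero_add, neg_add_cancel] at hr
    obtain ⟨a, ha⟩ := L1 (-(t - s))
    obtain ⟨b, hb⟩ := M1 (t - s)
    rw [ha, hb] at hr
    refine ⟨r * a, b - r * b, ?_⟩
    rw [hr]; module
  have P : ∀ s t, ∃ a b : ℝ, G s t = o + a • u + b • w := by
    intro s t
    obtain ⟨r, hr⟩ := (hH t (t + 1) (t + 2) (by norm_num)).1 s
    obtain ⟨a, b, h⟩ := P1 (t + 1) t (by norm_num)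
    obtain ⟨a', b', h'⟩ := P1 (t + 2) t (by norm_num)
    simp only [h, h'] at hr
    refine ⟨a + r * (a' - a), b + r * (b' - b), ?_⟩
    rw [hr]; module
  choose X Y hXY using P
  have X00 : ∀ t, X 0 t = 0 := by
    intro t
    obtain ⟨r, hr⟩ := M1 t
    exact (ind _ _ 0 r (by rw [← hXY, hr]; module)).1
  have Y00 : ∀ s, Y s 0 = 0 := by
    intro t
    obtain ⟨r, hr⟩ := L1 t
    exact (ind _ _ r 0 (by rw [← hXY, hr]; module)).2
  have key : ∀ s t s' t', X s t = X s' t' → Y s t = Y s' t' → s = s' ∧ t = t' := by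
    intro s t s' t' h1 h2
    exact hinj _ _ _ _ (by rw [hXY, hXY s' t', h1, h2])
  have coords : ∀ s t a b c d r, G s t = G a b + r • (G c d - G a b) →
      X s t = X a b + r * (X c d - X a b) ∧ Y s t = Y a b + r * (Y c d - Y a b) := by
    intro s t a b c d r h
    apply ind
    rw [← hXY, h, hXY a b, hXY c d]
    module
  have Xs : ∀ x, ∃ s, X s 0 = x := by
    intro x
    obtain ⟨s, hs⟩ := L2 x
    exact ⟨s, (ind _ _ x 0 (by rw [← hXY, hs]; module)).1⟩
  have Ys : ∀ x, ∃ s, Y 0 s = x := by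
    intro x
    obtain ⟨s, hs⟩ := M2 x
    exact ⟨s, (ind _ _ 0 x (by rw [← hXY, hs]; module)).2⟩
  have Yc : ∀ s t, Y s t = Y 0 t := by
    intro s t
    by_cases ht : t = 0
    · rw [ht, Y00, Y00]
    have hc : Y 1 t - Y 0 t = 0 := by
      by_contra hc
      obtain ⟨s, hs⟩ := (hH t 0 1 (by norm_num)).2 (-(Y 0 t) / (Y 1 t - Y 0 t))
      have h2 := (coords _ _ _ _ _ _ _ hs).2
      rw [div_mul_cancel₀ _ hc, add_neg_cancel] at h2
      obtain ⟨s', hs'⟩ := Xs (X s t)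
      exact ht (key s t s' 0 hs'.symm (by rw [h2, Y00])).2
    obtain ⟨r, hr⟩ := (hH t 0 1 (by norm_num)).1 s
    have h2 := (coords _ _ _ _ _ _ _ hr).2
    rw [h2, hc]; ring
  have Xc : ∀ s t, X s t = X s 0 := by
    intro s t
    by_cases ht : s = 0
    · rw [ht, X00, X00]
    have hc : X s 1 - X s 0 = 0 := by
      by_contra hc
      obtain ⟨t, hs⟩ := (hV s 0 1 (by norm_num)).2 (-(X s 0) / (X s 1 - X s 0))
      have h2 := (coords _ _ _ _ _ _ _ hs).1
      rw [div_mul_cancel₀ _ hc, add_neg_cancel] at h2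
      obtain ⟨t', hs'⟩ := Ys (Y s t)
      exact ht (key s t 0 t' (by rw [h2, X00]) hs'.symm).1
    obtain ⟨r, hr⟩ := (hV s 0 1 (by norm_num)).1 t
    have h2 := (coords _ _ _ _ _ _ _ hr).1
    rw [h2, hc]; ring
  obtain ⟨f, hf⟩ : ∃ f : ℝ → ℝ, ∀ s t, X s t = f s := ⟨fun s => X s 0, Xc⟩
  obtain ⟨g, hg⟩ : ∃ g : ℝ → ℝ, ∀ s t, Y s t = g t := ⟨fun t => Y 0 t, Yc⟩
  simp only [hf, hg] at hXY X00 Y00 key coords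
  have f0 : f 0 = 0 := X00 0
  have g0 : g 0 = 0 := Y00 0
  have f1 : f 1 ≠ 0 := by
    intro h; simpa using key 1 0 0 0 (by rw [h, f0]) rfl
  have g1 : g 1 ≠ 0 := by
    intro h; simpa using key 0 1 0 0 rfl (by rw [h, g0])
  have D0 : ∀ s, ∃ r, f s = r * f 1 ∧ g s = r * g 1 := by
    intro s
    obtain ⟨r, hr⟩ := (hD 0 0 1 (by norm_num)).1 s
    have := coords _ _ _ _ _ _ _ hr
    simp only [add_zero, f0, g0, zero_add, sub_zero] at this
    exact ⟨r, this⟩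
  have D0' : ∀ r, ∃ s, f s = r * f 1 ∧ g s = r * g 1 := by
    intro r
    obtain ⟨s, hr⟩ := (hD 0 0 1 (by norm_num)).2 r
    have := coords _ _ _ _ _ _ _ hr
    simp only [add_zero, f0, g0, zero_add, sub_zero] at this
    exact ⟨s, this⟩
  have gadd : ∀ x c, g (x + c) = g x + g c := by
    intro x c
    by_cases hc : c = 0
    · rw [hc, g0, add_zero, add_zero]
    have slope : g (1 + c) - g c = g 1 := by
      by_contra hne
      have hne' : g 1 - (g (1 + c) - g c) ≠ 0 := by
        intro h; apply hne; linarith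
      obtain ⟨r, hr'⟩ : ∃ r, r * (g 1 - (g (1 + c) - g c)) = g c :=
        ⟨g c / (g 1 - (g (1 + c) - g c)), div_mul_cancel₀ _ hne'⟩
      obtain ⟨s, hs⟩ := (hD c 0 1 (by norm_num)).2 r
      obtain ⟨h1, h2⟩ := coords _ _ _ _ _ _ _ hs
      simp only [f0, zero_add, sub_zero] at h1 h2
      obtain ⟨s', h1', h2'⟩ := D0' r
      have := key s (s + c) s' s' (by rw [h1, h1']) (by rw [h2, h2']; linarith)
      apply hc; linarith [this.1, this.2]
    obtain ⟨r, hr⟩ := (hD c 0 1 (by norm_num)).1 x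
    obtain ⟨h1, h2⟩ := coords _ _ _ _ _ _ _ hr
    simp only [f0, zero_add, sub_zero] at h1 h2
    obtain ⟨r', h1', h2'⟩ := D0 x
    have : r = r' := mul_right_cancel₀ f1 (h1.symm.trans h1')
    rw [h2, h2', slope, this]; ring
  have fg : ∀ x, f x = g x * (f 1 / g 1) := by
    intro x
    obtain ⟨r, h1, h2⟩ := D0 x
    rw [h1, h2]; field_simp
  refine ⟨u, w, f, g, ?_, gadd, ?_⟩
  · intro x y
    rw [fg (x + y), fg x, fg y, gadd]; ring
  · intro s t
    rw [← ho]; exact hXY s t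

theorem affine_additive_of_three_directions_plane
    {n : ℕ} (hn : 2 ≤ n)
    (v : Fin 3 → (Fin 2 → ℝ))
    (hv : ∀ i j : Fin 3, i ≠ j → LinearIndependent ℝ ![v i, v j])
    (F : (Fin 2 → ℝ) → (Fin n → ℝ))
    (hinj : Function.Injective F)
    (honto : ∀ (i : Fin 3) (a : Fin 2 → ℝ), IsLine (F '' lineThru a (v i))) :
    ∃ (A : (Fin 2 → ℝ) → (Fin n → ℝ)) (c : Fin n → ℝ),
      (∀ x y, A (x + y) = A x + A y) ∧ ∀ x, F x = A x + c := by
  have h01 := hv 0 1 (by decide)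
  have h02 := hv 0 2 (by decide)
  have h12 := hv 1 2 (by decide)
  have v0 : v 0 ≠ 0 := h01.ne_zero 0
  have v1 : v 1 ≠ 0 := h01.ne_zero 1
  have v2 : v 2 ≠ 0 := h02.ne_zero 1
  have hspan : ∀ x : Fin 2 → ℝ, ∃ a b : ℝ, a • v 0 + b • v 1 = x := by
    intro x
    have h := h01.span_eq_top_of_card_eq_finrank (by simp)
    have hx : x ∈ Submodule.span ℝ (Set.range ![v 0, v 1]) := by rw [h]; trivial
    rw [Matrix.range_cons, Matrix.range_cons, Matrix.range_empty, Set.union_empty,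
      Set.singleton_union, Submodule.mem_span_pair] at hx
    exact hx
  rw [LinearIndependent.pair_iff] at h01 h02 h12
  obtain ⟨a, b, hab⟩ := hspan (v 2)
  have ha : a ≠ 0 := by
    rintro rfl
    have := h12 b (-1) (by rw [← hab]; module)
    norm_num at this
  have hb : b ≠ 0 := by
    rintro rfl
    have := h02 a (-1) (by rw [← hab]; module)
    norm_num at this
  have core := core_three
    (fun s t : ℝ => F (s • (a • v 0) + t • (b • v 1))) ?_ ?_ ?_ ?_
  · obtain ⟨u, w, f, g, hf, hg, hG⟩ := core
    refine ⟨fun x => F x - F 0, F 0, ?_, fun x => by simp⟩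
    have hp : ∀ x : Fin 2 → ℝ, ∃ s t : ℝ, x = s • (a • v 0) + t • (b • v 1) := by
      intro x
      obtain ⟨p, q, h⟩ := hspan x
      refine ⟨p / a, q / b, ?_⟩
      rw [smul_smul, smul_smul, div_mul_cancel₀ _ ha, div_mul_cancel₀ _ hb, h]
    simp only [zero_smul, add_zero] at hG
    intro x y
    obtain ⟨s, t, rfl⟩ := hp x
    obtain ⟨s', t', rfl⟩ := hp y
    have e : s • (a • v 0) + t • (b • v 1) + (s' • (a • v 0) + t' • (b • v 1)) =
      (s + s') • (a • v 0) + (t + t') • (b • v 1) := by module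
    simp only [e, hG, hf, hg]
    module
  · intro s t s' t' h
    have h := hinj h
    have := h01 ((s - s') * a) ((t - t') * b) (by
      rw [← sub_eq_zero] at h
      rw [← h]; module)
    simp only [mul_eq_zero, ha, hb, or_false] at this
    constructor <;> linarith [this.1, this.2]
  · intro t
    have := lineParam_of_isLine F hinj (t • (b • v 1)) (v 0) v0 a ha (honto 0 _)
    simpa only [add_comm] using this
  · intro s
    exact lineParam_of_isLine F hinj (s • (a • v 0)) (v 1) v1 b hb (honto 1 _)
  · intro c
    have := lineParam_of_isLine F hinj (c • (b • v 1)) (v 2) v2 1 one_ne_zero (honto 2 _)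
    convert this using 3 with x
    rw [← hab]; module
end

section
/- Let n ≥ 2 and let S = {eᵢ : 1 ≤ i ≤ n} ∪ {eᵢ + eⱼ : 1 ≤ i < j ≤ n} ∪ {e₁ + e₂ + ⋯ + eₙ} ⊂ ℝⁿ. Let F : ℝⁿ → ℝⁿ be injective and suppose that F maps each line in ℒ(S) onto a line. Then there exist an additive bijection f : ℝ → ℝ and vectors v₁, ..., vₙ ∈ ℝⁿ such that for every x = (x₁, ..., xₙ) ∈ ℝⁿ, F(x₁, ..., xₙ) − F(0) = Σᵢ f(xᵢ)vᵢ. -/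
/-- The curve `γ` runs through a whole line, parametrised from any two of its points. -/
def LineLike {V : Type*} [AddCommGroup V] [Module ℝ V] (γ : ℝ → V) : Prop :=
  ∀ s s' : ℝ, s ≠ s' → ∃ τ : ℝ → ℝ, Function.Surjective τ ∧
    ∀ t, γ t = γ s + τ t • (γ s' - γ s)

lemma lineLike_of_isLine {n : ℕ} (F : (Fin n → ℝ) → (Fin n → ℝ))
    (hinj : Function.Injective F) (a b : Fin n → ℝ) (hb : b ≠ 0)
    (h : IsLine (F '' lineThru a b)) : LineLike (fun t : ℝ => F (a + t • b)) := by
  obtain ⟨p, q, hq, hpq⟩ := h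
  intro s s' hs
  have h1 : ∀ t : ℝ, ∃ r : ℝ, F (a + t • b) = p + r • q := by
    intro t
    have : F (a + t • b) ∈ lineThru p q := by
      rw [← hpq]; exact ⟨_, ⟨t, rfl⟩, rfl⟩
    exact this
  have h2 : ∀ r : ℝ, ∃ t : ℝ, F (a + t • b) = p + r • q := by
    intro r
    have : p + r • q ∈ F '' lineThru a b := by
      rw [hpq]; exact ⟨r, rfl⟩
    obtain ⟨x, ⟨t, rfl⟩, hx⟩ := this
    exact ⟨t, hx⟩
  choose ρ hρ using h1
  have hne : ρ s' - ρ s ≠ 0 := by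
    intro h0
    have h3 : ρ s' = ρ s := by linarith
    have h4 : F (a + s • b) = F (a + s' • b) := by rw [hρ, hρ, h3]
    have h5 := add_left_cancel (hinj h4)
    exact hs (smul_left_injective ℝ hb h5)
  refine ⟨fun t => (ρ t - ρ s) / (ρ s' - ρ s), ?_, ?_⟩
  · intro r
    obtain ⟨t, ht⟩ := h2 (ρ s + r * (ρ s' - ρ s))
    refine ⟨t, ?_⟩
    rw [hρ] at ht
    have := smul_left_injective ℝ hq (add_left_cancel ht)
    simp only at this ⊢
    rw [this]; field_simp; ring
  · intro t
    have h6 : ρ t = ρ s + (ρ t - ρ s) / (ρ s' - ρ s) * (ρ s' - ρ s) := by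
      field_simp; ring
    simp only
    rw [hρ t, hρ s, hρ s']
    conv_lhs => rw [h6]
    module

lemma planar {V : Type*} [AddCommGroup V] [Module ℝ V] (G : ℝ → ℝ → V)
    (hinj : ∀ x y x' y', G x y = G x' y' → x = x' ∧ y = y')
    (hl : ∀ y, LineLike (fun x => G x y))
    (hm : ∀ x, LineLike (fun y => G x y))
    (hd : ∀ c, LineLike (fun t => G t (t + c))) :
    ∃ f : ℝ → ℝ, Function.Bijective f ∧ f 1 = 1 ∧ (∀ a b, f (a + b) = f a + f b) ∧
      ∀ x y, G x y = G 0 0 + f x • (G 1 0 - G 0 0) + f y • (G 0 1 - G 0 0) := by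
  obtain ⟨g, gs, hg⟩ := hl 0 0 1 zero_ne_one
  obtain ⟨h, hs, hh⟩ := hm 0 0 1 zero_ne_one
  simp only at hg hh
  set o := G 0 0 with ho
  set u := G 1 0 - o with hu
  set w := G 0 1 - o with hw
  have hind0 : ∀ α β : ℝ, α • u = β • w → α • u = 0 ∧ β • w = 0 := by
    intro α β hab
    obtain ⟨x, rfl⟩ := gs α
    obtain ⟨y, rfl⟩ := hs β
    have : G x 0 = G 0 y := by rw [hg, hh, hab]
    obtain ⟨rfl, rfl⟩ := hinj _ _ _ _ this
    have h1 := hg 0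
    have h2 := hh 0
    rw [← ho] at h1 h2
    exact ⟨by simpa using h1.symm, by simpa using h2.symm⟩
  have hu0 : u ≠ 0 := by
    intro h0
    have := (hinj _ _ _ _ (sub_eq_zero.1 h0)).1
    norm_num at this
  have hw0 : w ≠ 0 := by
    intro h0
    have := (hinj _ _ _ _ (sub_eq_zero.1 h0)).2
    norm_num at this
  have hind : ∀ α β α' β' : ℝ, o + α • u + β • w = o + α' • u + β' • w → α = α' ∧ β = β' := by
    intro α β α' β' hab
    have h1 : (α - α') • u = (β' - β) • w := by
      have h2 : o + α • u + β • w - (o + α' • u + β • w) =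
        o + α' • u + β' • w - (o + α' • u + β • w) := by rw [hab]
      calc (α - α') • u = o + α • u + β • w - (o + α' • u + β • w) := by module
        _ = _ := h2
        _ = _ := by module
    obtain ⟨h3, h4⟩ := hind0 _ _ h1
    have h5 := (smul_eq_zero.1 h3).resolve_right hu0
    have h6 := (smul_eq_zero.1 h4).resolve_right hw0
    constructor <;> linarith
  -- the image lies in a plane
  have hP1 : ∀ x y, x ≠ y → ∃ α β : ℝ, G x y = o + α • u + β • w := by
    intro x y hxy
    have hc : -(y - x) ≠ 0 := by
      intro h0; apply hxy; linarith
    obtain ⟨τ, -, hτ⟩ := hd (y - x) (-(y - x)) 0 hc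
    have := hτ x
    simp only [add_sub_cancel, neg_add_cancel, zero_add] at this
    rw [this, hg, hh]
    exact ⟨g (-(y - x)) - τ x * g (-(y - x)), τ x * h (y - x), by module⟩
  have hP : ∀ x y, ∃ α β : ℝ, G x y = o + α • u + β • w := by
    intro x y
    by_cases hxy : x = y
    · obtain ⟨τ, -, hτ⟩ := hl y (y + 1) (y + 2) (by intro h0; linarith)
      obtain ⟨α, β, h1⟩ := hP1 (y + 1) y (by simp)
      obtain ⟨α', β', h2⟩ := hP1 (y + 2) y (by simp)
      have := hτ x
      simp only at this
      rw [this, h1, h2]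
      exact ⟨α + τ x * (α' - α), β + τ x * (β' - β), by module⟩
    · exact hP1 x y hxy
  choose A B hAB using hP
  have hA0 : ∀ x, A x 0 = g x ∧ B x 0 = 0 := by
    intro x
    apply hind
    rw [← hAB, hg]; simp
  have hB0 : ∀ y, A 0 y = 0 ∧ B 0 y = h y := by
    intro y
    apply hind
    rw [← hAB, hh]; simp
  have hB : ∀ x y, B x y = h y := by
    intro x y
    by_cases hy : y = 0
    · subst hy
      rw [(hA0 x).2, ← (hB0 0).2, (hA0 0).2]
    by_cases hx : x = 0
    · subst hx; exact (hB0 y).2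
    by_contra hne
    obtain ⟨τ, τs, hτ⟩ := hl y 0 x (Ne.symm hx)
    have hne' : B x y - h y ≠ 0 := sub_ne_zero.2 hne
    obtain ⟨t, ht⟩ := τs (-(h y) / (B x y - h y))
    have h1 := hτ t
    simp only at h1
    rw [hAB t y, hAB 0 y, hAB x y, (hB0 y).1, (hB0 y).2] at h1
    have h2 : B t y = h y + τ t * (B x y - h y) := by
      refine (hind (A t y) _ (τ t * A x y) _ ?_).2
      rw [h1]; module
    have h3 : B t y = 0 := by rw [h2, ht]; field_simp; ring
    obtain ⟨x', hx'⟩ := gs (A t y)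
    have h4 : G t y = G x' 0 := by
      rw [hAB, hg, hx', h3]; simp
    exact hy (hinj _ _ _ _ h4).2
  have hA : ∀ x y, A x y = g x := by
    intro x y
    by_cases hx : x = 0
    · subst hx
      rw [(hB0 y).1, ← (hA0 0).1, (hB0 0).1]
    by_cases hy : y = 0
    · subst hy; exact (hA0 x).1
    by_contra hne
    obtain ⟨τ, τs, hτ⟩ := hm x 0 y (Ne.symm hy)
    have hne' : A x y - g x ≠ 0 := sub_ne_zero.2 hne
    obtain ⟨t, ht⟩ := τs (-(g x) / (A x y - g x))
    have h1 := hτ t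
    simp only at h1
    rw [hAB x t, hAB x 0, hAB x y, (hA0 x).1, (hA0 x).2] at h1
    have h2 : A x t = g x + τ t * (A x y - g x) := by
      refine (hind _ (B x t) _ (τ t * B x y) ?_).1
      rw [h1]; module
    have h3 : A x t = 0 := by rw [h2, ht]; field_simp; ring
    obtain ⟨y', hy'⟩ := hs (B x t)
    have h4 : G x t = G 0 y' := by
      rw [hAB, hh, hy', h3]; simp
    exact hx (hinj _ _ _ _ h4).1
  have hG : ∀ x y, G x y = o + g x • u + h y • w := by
    intro x y; rw [hAB, hA, hB]
  have g0 : g 0 = 0 := by rw [← (hA0 0).1, (hB0 0).1]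
  have h0 : h 0 = 0 := by rw [← (hB0 0).2, (hA0 0).2]
  have g1 : g 1 = 1 := by
    refine (hind _ (h 0) _ (h 0) ?_).1
    rw [← hG, h0, hu]; simp
  have h1 : h 1 = 1 := by
    refine (hind (g 0) _ (g 0) _ ?_).2
    rw [← hG, g0, hw]; simp
  have gi : Function.Injective g := by
    intro x x' hx
    exact (hinj x 0 x' 0 (by rw [hG, hG, hx])).1
  -- slopes along diagonals
  have hdiag : ∀ c t, h (t + c) = h c + g t * (h (1 + c) - h c) := by
    intro c t
    obtain ⟨τ, -, hτ⟩ := hd c 0 1 zero_ne_one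
    have := hτ t
    simp only [hG, g0, g1, zero_add] at this
    have h2 := hind (g t) (h (t + c)) (τ t) (h c + τ t * (h (1 + c) - h c)) (by
      rw [this]; module)
    rw [h2.2, h2.1]
  have hgh : ∀ t, h t = g t := by
    intro t
    have := hdiag 0 t
    simpa [h0, h1] using this
  have hadd : ∀ t c, g (t + c) = g t + g c := by
    intro t c
    have hm1 : g (1 + c) - g c = 1 := by
      by_contra hne
      by_cases hc : c = 0
      · subst hc; apply hne; simp [g0, g1]
      have hne' : 1 - (g (1 + c) - g c) ≠ 0 := fun h5 => hne (by linarith)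
      obtain ⟨s, hs'⟩ := gs (g c / (1 - (g (1 + c) - g c)))
      have h3 := hdiag c s
      simp only [hgh] at h3
      have h4 : g (s + c) = g s := by
        rw [h3]
        have : g s * (1 - (g (1 + c) - g c)) = g c := by rw [hs']; field_simp
        linarith
      have := gi h4
      exact hc (by linarith)
    have h3 := hdiag c t
    simp only [hgh] at h3
    rw [h3, hm1]; ring
  refine ⟨g, ⟨gi, gs⟩, g1, hadd, ?_⟩
  intro x y
  rw [hG, hgh]

lemma planar_at {n : ℕ}
    (F : (Fin n → ℝ) → (Fin n → ℝ))
    (hinj : Function.Injective F)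
    (honto : ∀ b : Fin n → ℝ,
      ((∃ i : Fin n, b = (Pi.single i 1 : Fin n → ℝ)) ∨
       (∃ i j : Fin n, i < j ∧
          b = (Pi.single i 1 : Fin n → ℝ) + (Pi.single j 1 : Fin n → ℝ)) ∨
       b = ∑ i : Fin n, (Pi.single i 1 : Fin n → ℝ)) →
      ∀ a : Fin n → ℝ, IsLine (F '' lineThru a b))
    (a : Fin n → ℝ) (i j : Fin n) (hij : i ≠ j) :
    ∃ f : ℝ → ℝ, Function.Bijective f ∧ f 1 = 1 ∧ (∀ a b, f (a + b) = f a + f b) ∧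
      ∀ x y, F (a + Pi.single i x + Pi.single j y) =
        F a + f x • (F (a + Pi.single i 1) - F a) + f y • (F (a + Pi.single j 1) - F a) := by
  have hsm : ∀ (k : Fin n) (t : ℝ), (Pi.single k t : Fin n → ℝ) = t • Pi.single k 1 := by
    intro k t; rw [← Pi.single_smul]; simp
  have hne : ∀ k : Fin n, (Pi.single k 1 : Fin n → ℝ) ≠ 0 := by
    intro k h0; simpa using congrFun h0 k
  have hnd : (Pi.single i 1 + Pi.single j 1 : Fin n → ℝ) ≠ 0 := by
    intro h0; simpa [hij] using congrFun h0 i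
  obtain ⟨f, hf1, hf2, hf3, hf4⟩ :=
    planar (fun x y => F (a + Pi.single i x + Pi.single j y)) (by
      intro x y x' y' h
      have h1 := hinj h
      have h2 := congrFun h1 i
      have h3 := congrFun h1 j
      simp [hij, hij.symm] at h2 h3
      exact ⟨h2, h3⟩)
    (by
      intro y
      have := lineLike_of_isLine F hinj (a + Pi.single j y) _ (hne i)
        (honto _ (Or.inl ⟨i, rfl⟩) _)
      convert this using 3 with x
      rw [hsm i x]; abel)
    (by
      intro x
      have := lineLike_of_isLine F hinj (a + Pi.single i x) _ (hne j)
        (honto _ (Or.inl ⟨j, rfl⟩) _)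
      convert this using 3 with y
      rw [hsm j y])
    (by
      intro c
      have := lineLike_of_isLine F hinj (a + Pi.single j c) _ hnd
        (honto _ (Or.inr (Or.inl (by
          rcases lt_or_gt_of_ne hij with h | h
          · exact ⟨i, j, h, rfl⟩
          · exact ⟨j, i, h, add_comm _ _⟩))) _)
      convert this using 3 with t
      rw [hsm i t, hsm j (t + c), hsm j c]; module)
  refine ⟨f, hf1, hf2, hf3, ?_⟩
  simpa using hf4

/-- **Theorem (a sufficient set of `n + n(n-1)/2 + 1` directions in ℝⁿ).**
Let `n ≥ 2` and `S = {eᵢ} ∪ {eᵢ + eⱼ : i < j} ∪ {e₁ + ⋯ + eₙ}`. If `F : ℝⁿ → ℝⁿ` is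
injective and maps each line in `ℒ(S)` onto a line, then there are an additive
bijection `f : ℝ → ℝ` and vectors `v₁,…,vₙ ∈ ℝⁿ` with
`F x - F 0 = ∑ f (xᵢ) • vᵢ` for all `x`. -/
theorem diagonal_additive_form_of_S_directions
    {n : ℕ} (hn : 2 ≤ n)
    (F : (Fin n → ℝ) → (Fin n → ℝ))
    (hinj : Function.Injective F)
    (honto : ∀ b : Fin n → ℝ,
      ((∃ i : Fin n, b = (Pi.single i 1 : Fin n → ℝ)) ∨
       (∃ i j : Fin n, i < j ∧
          b = (Pi.single i 1 : Fin n → ℝ) + (Pi.single j 1 : Fin n → ℝ)) ∨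
       b = ∑ i : Fin n, (Pi.single i 1 : Fin n → ℝ)) →
      ∀ a : Fin n → ℝ, IsLine (F '' lineThru a b)) :
    ∃ (f : ℝ → ℝ) (v : Fin n → (Fin n → ℝ)),
      Function.Bijective f ∧ (∀ a b : ℝ, f (a + b) = f a + f b) ∧
      ∀ x : Fin n → ℝ, F x - F 0 = ∑ i, f (x i) • v i := by
  have hpl := planar_at F hinj honto
  have f0 : ∀ f : ℝ → ℝ, (∀ a b, f (a + b) = f a + f b) → f 0 = 0 := by
    intro f hf
    have := hf 0 0
    simp at this; exact this
  -- mixed differences vanish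
  have hmix : ∀ (a : Fin n → ℝ) (i j : Fin n), i ≠ j → ∀ x y : ℝ,
      F (a + Pi.single j y + Pi.single i x) - F (a + Pi.single j y) =
        F (a + Pi.single i x) - F a := by
    intro a i j hij x y
    obtain ⟨f, -, -, hf, h⟩ := hpl a i j hij
    have hz := f0 f hf
    have h1 := h x y
    have h2 := h x 0
    have h3 := h 0 y
    simp only [Pi.single_zero, add_zero, hz, zero_smul] at h2 h3
    rw [add_right_comm, h1, h2, h3]; abel
  have hdiff : ∀ (x : Fin n → ℝ) (s : Finset (Fin n)) (i : Fin n), i ∉ s → ∀ t : ℝ,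
      F (∑ k ∈ s, Pi.single k (x k) + Pi.single i t) - F (∑ k ∈ s, Pi.single k (x k)) =
        F (Pi.single i t) - F 0 := by
    intro x s
    induction s using Finset.induction_on with
    | empty => intro i _ t; simp
    | insert j s hj ih =>
      intro i hi t
      simp only [Finset.mem_insert, not_or] at hi
      rw [Finset.sum_insert hj, add_comm (Pi.single j (x j) : Fin n → ℝ), hmix _ i j hi.1]
      exact ih i hi.2 t
  have hsum : ∀ (x : Fin n → ℝ) (s : Finset (Fin n)),
      F (∑ k ∈ s, Pi.single k (x k)) - F 0 = ∑ k ∈ s, (F (Pi.single k (x k)) - F 0) := by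
    intro x s
    induction s using Finset.induction_on with
    | empty => simp
    | insert j s hj ih =>
      rw [Finset.sum_insert hj, Finset.sum_insert hj, ← ih, ← hdiff x s j hj, add_comm (Pi.single j (x j) : Fin n → ℝ)]
      abel
  let i0 : Fin n := ⟨0, by omega⟩
  let i1 : Fin n := ⟨1, by omega⟩
  have h01 : i0 ≠ i1 := by simp [i0, i1]
  obtain ⟨f, fb, f1, fadd, hf⟩ := hpl 0 i0 i1 h01
  have hf0 : ∀ x, F (Pi.single i0 x) - F 0 = f x • (F (Pi.single i0 1) - F 0) := by
    intro x
    have := hf x 0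
    simp only [Pi.single_zero, add_zero, zero_add, f0 f fadd, zero_smul] at this
    rw [this]; abel
  have hv0 : F (Pi.single i0 1) - F 0 ≠ 0 := by
    intro h
    have := congrFun (hinj (sub_eq_zero.1 h)) i0
    simp at this
  have hall : ∀ i x, F (Pi.single i x) - F 0 = f x • (F (Pi.single i 1) - F 0) := by
    intro i x
    by_cases hi : i0 = i
    · subst hi; exact hf0 x
    obtain ⟨g, -, -, gadd, hg⟩ := hpl 0 i0 i hi
    have h1 := hg x 0
    have h2 := hg 0 x
    simp only [Pi.single_zero, add_zero, zero_add, f0 g gadd, zero_smul] at h1 h2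
    have h3 : g x = f x := by
      apply smul_left_injective ℝ hv0
      simp only
      rw [← hf0 x, h1]; abel
    rw [h2, h3]; abel
  refine ⟨f, fun i => F (Pi.single i 1) - F 0, fb, fadd, ?_⟩
  intro x
  have := hsum x Finset.univ
  rw [Finset.univ_sum_single] at this
  rw [this]
  exact Finset.sum_congr rfl fun i _ => hall i (x i)
end

section
/- Let n ≥ 2 and let F : ℝPⁿ → ℝPⁿ be an injective mapping. Let p̄₁, ..., p̄_m ∈ ℝPⁿ with m ≤ n + 1 be projective points in general position, and assume that F maps any projective line passing through one of the points p̄ᵢ onto a projective line. Denote q̄ᵢ = F(p̄ᵢ). Then q̄₁, ..., q̄_m are in general position and F(s̄p{p̄₁, ..., p̄_m}) = s̄p{q̄₁, ..., q̄_m}. -/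
open scoped LinearAlgebra.Projectivization

lemma aux_submodule_le {n : ℕ} (x : ℙ ℝ (Fin (n + 1) → ℝ)) (W : Submodule ℝ (Fin (n + 1) → ℝ)) :
    x.submodule ≤ W ↔ x.rep ∈ W := by
  rw [Projectivization.submodule_eq, Submodule.span_singleton_le_iff_mem]

lemma aux_eq_of_le {n : ℕ} (x y : ℙ ℝ (Fin (n + 1) → ℝ)) (h : x.submodule ≤ y.submodule) :
    x = y := by
  apply Projectivization.submodule_injective
  apply Submodule.eq_of_le_of_finrank_eq h
  rw [Projectivization.finrank_submodule, Projectivization.finrank_submodule]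

lemma aux_finrank {n : ℕ} (x y : ℙ ℝ (Fin (n + 1) → ℝ)) (h : x ≠ y) :
    Module.finrank ℝ (x.submodule ⊔ y.submodule : Submodule ℝ (Fin (n + 1) → ℝ)) = 2 := by
  have h1 := Projectivization.linearIndependent_pair_iff_ne.2 h
  have h2 := finrank_span_eq_card h1
  rw [Projectivization.submodule_eq, Projectivization.submodule_eq, ← Submodule.span_union]
  have h3 : Set.range ![x.rep, y.rep] = {x.rep} ∪ {y.rep} := by
    rw [Matrix.range_cons, Matrix.range_cons, Matrix.range_empty, Set.union_empty]
  rw [h3] at h2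
  simpa using h2

lemma aux_line {n : ℕ} (F : ℙ ℝ (Fin (n + 1) → ℝ) → ℙ ℝ (Fin (n + 1) → ℝ))
    (hinj : Function.Injective F) (p : ℙ ℝ (Fin (n + 1) → ℝ))
    (hline : ∀ l : Set (ℙ ℝ (Fin (n + 1) → ℝ)), IsProjLine l → p ∈ l → IsProjLine (F '' l))
    (y : ℙ ℝ (Fin (n + 1) → ℝ)) (h : p ≠ y) :
    F '' {x | x.submodule ≤ p.submodule ⊔ y.submodule} =
      {x | x.submodule ≤ (F p).submodule ⊔ (F y).submodule} := by
  obtain ⟨W, hW, hE⟩ := hline {x | x.submodule ≤ p.submodule ⊔ y.submodule}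
    ⟨_, aux_finrank p y h, rfl⟩ (by simp)
  rw [hE]
  have h1 : F p ∈ {x : ℙ ℝ (Fin (n + 1) → ℝ) | x.submodule ≤ W} := by
    rw [← hE]; exact ⟨p, by simp, rfl⟩
  have h2 : F y ∈ {x : ℙ ℝ (Fin (n + 1) → ℝ) | x.submodule ≤ W} := by
    rw [← hE]; exact ⟨y, by simp, rfl⟩
  have h3 : (F p).submodule ⊔ (F y).submodule = W := by
    apply Submodule.eq_of_le_of_finrank_eq (sup_le h1 h2)
    rw [hW, aux_finrank _ _ (hinj.ne h)]
  rw [h3]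

lemma aux_split {n : ℕ} (p x : ℙ ℝ (Fin (n + 1) → ℝ)) (A : Submodule ℝ (Fin (n + 1) → ℝ))
    (hx : x.submodule ≤ p.submodule ⊔ A) (hne : x ≠ p) :
    ∃ y : ℙ ℝ (Fin (n + 1) → ℝ), y.submodule ≤ A ∧ x.submodule ≤ p.submodule ⊔ y.submodule := by
  rw [aux_submodule_le] at hx
  obtain ⟨b, hb, a, ha, hab⟩ := Submodule.mem_sup.1 hx
  have ha0 : a ≠ 0 := by
    rintro rfl
    apply hne
    apply aux_eq_of_le
    rw [aux_submodule_le, ← hab, add_zero]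
    exact hb
  refine ⟨Projectivization.mk ℝ a ha0, ?_, ?_⟩
  · rw [Projectivization.submodule_mk, Submodule.span_singleton_le_iff_mem]
    exact ha
  · rw [aux_submodule_le, ← hab, Projectivization.submodule_mk]
    exact Submodule.add_mem_sup hb (Submodule.mem_span_singleton_self a)

lemma aux_iSup {n m : ℕ} (p : Fin (m + 1) → ℙ ℝ (Fin (n + 1) → ℝ)) :
    ⨆ i, (p i).submodule = (p 0).submodule ⊔ ⨆ i : Fin m, (p i.succ).submodule := by
  apply le_antisymm
  · refine iSup_le fun i => ?_
    refine Fin.cases le_sup_left (fun j => ?_) i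
    exact le_sup_of_le_right (le_iSup (fun i : Fin m => (p i.succ).submodule) j)
  · exact sup_le (le_iSup (fun i => (p i).submodule) 0)
      (iSup_le fun i => le_iSup (fun i => (p i).submodule) i.succ)

lemma aux_indep {n m : ℕ} (p : Fin (m + 1) → ℙ ℝ (Fin (n + 1) → ℝ)) :
    LinearIndependent ℝ (fun i => (p i).rep) ↔
      LinearIndependent ℝ (fun i : Fin m => (p i.succ).rep) ∧
        ¬ (p 0).submodule ≤ ⨆ i : Fin m, (p i.succ).submodule := by
  rw [linearIndependent_finSucc, aux_submodule_le]
  simp only [Projectivization.submodule_eq, ← Submodule.span_range_eq_iSup]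
  rfl

lemma aux_main {n m : ℕ} (p : Fin m → ℙ ℝ (Fin (n + 1) → ℝ))
    (hp : LinearIndependent ℝ (fun i => (p i).rep))
    (F : ℙ ℝ (Fin (n + 1) → ℝ) → ℙ ℝ (Fin (n + 1) → ℝ))
    (hinj : Function.Injective F)
    (hline : ∀ l : Set (ℙ ℝ (Fin (n + 1) → ℝ)), IsProjLine l →
      (∃ i, p i ∈ l) → IsProjLine (F '' l)) :
    LinearIndependent ℝ (fun i => (F (p i)).rep) ∧
    F '' {x | x.submodule ≤ ⨆ i, (p i).submodule} =
      {y | y.submodule ≤ ⨆ i, (F (p i)).submodule} := by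
  induction m with
  | zero =>
    refine ⟨linearIndependent_empty_type, ?_⟩
    have h (x : ℙ ℝ (Fin (n + 1) → ℝ)) : ¬ x.submodule ≤ ⊥ := by
      rw [aux_submodule_le, Submodule.mem_bot]
      exact x.rep_nonzero
    simp only [iSup_of_empty, h, Set.ofPred_false, Set.image_empty]
  | succ m ih =>
    obtain ⟨hp1, hp0⟩ := (aux_indep p).1 hp
    obtain ⟨hq1, hE⟩ := ih (fun i => p i.succ) hp1
      (fun l hl ⟨i, hi⟩ => hline l hl ⟨i.succ, hi⟩)
    have hL := aux_line F hinj (p 0) (fun l hl h => hline l hl ⟨0, h⟩)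
    have hne (y : ℙ ℝ (Fin (n + 1) → ℝ))
        (hy : y.submodule ≤ ⨆ i : Fin m, (p i.succ).submodule) : p 0 ≠ y := by
      rintro rfl; exact hp0 hy
    refine ⟨(aux_indep (fun i => F (p i))).2 ⟨hq1, fun h => ?_⟩, ?_⟩
    · obtain ⟨x, hx, hxe⟩ := hE.symm.subset h
      rw [hinj hxe] at hx
      exact hp0 hx
    · rw [aux_iSup, aux_iSup (fun i => F (p i))]
      ext z
      constructor
      · rintro ⟨x, hx, rfl⟩
        by_cases hxp : x = p 0
        · rw [hxp, Set.mem_setOf_eq]; exact le_sup_left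
        obtain ⟨y, hyA, hxy⟩ := aux_split _ _ _ hx hxp
        have h1 := (hL y (hne y hyA)).subset ⟨x, hxy, rfl⟩
        have h2 := hE.subset ⟨y, hyA, rfl⟩
        rw [Set.mem_setOf_eq] at h1 h2 ⊢
        exact le_trans h1 (sup_le_sup_left h2 _)
      · intro hz
        by_cases hzp : z = F (p 0)
        · exact ⟨p 0, by rw [Set.mem_setOf_eq]; exact le_sup_left, hzp.symm⟩
        obtain ⟨w, hwA, hzw⟩ := aux_split _ _ _ hz hzp
        obtain ⟨y, hy, rfl⟩ := hE.symm.subset hwA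
        obtain ⟨x, hx, rfl⟩ := (hL y (hne y hy)).symm.subset hzw
        refine ⟨x, ?_, rfl⟩
        rw [Set.mem_setOf_eq] at hx hy ⊢
        exact le_trans hx (sup_le_sup_left hy _)

/-- **Proposition (images of generic points and of their projective span).**
Let `n ≥ 2` and let `F : ℝPⁿ → ℝPⁿ` be injective. Let `p̄₁,…,p̄_m` (`m ≤ n+1`) be in
general position, and assume every projective line through one of the `p̄ᵢ` is mapped
onto a projective line. Then the points `q̄ᵢ = F p̄ᵢ` are in general position and
`F (s̄p{p̄₁,…,p̄_m}) = s̄p{q̄₁,…,q̄_m}`. -/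
theorem image_of_projective_span_of_generic_points
    {n m : ℕ} (hn : 2 ≤ n) (hm : m ≤ n + 1)
    (p : Fin m → ℙ ℝ (Fin (n + 1) → ℝ))
    (hp : LinearIndependent ℝ (fun i => (p i).rep))
    (F : ℙ ℝ (Fin (n + 1) → ℝ) → ℙ ℝ (Fin (n + 1) → ℝ))
    (hinj : Function.Injective F)
    (hline : ∀ l : Set (ℙ ℝ (Fin (n + 1) → ℝ)), IsProjLine l →
      (∃ i, p i ∈ l) → IsProjLine (F '' l)) :
    LinearIndependent ℝ (fun i => (F (p i)).rep) ∧
    F '' {x | x.submodule ≤ ⨆ i, (p i).submodule} =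
      {y | y.submodule ≤ ⨆ i, (F (p i)).submodule} := by
  exact aux_main p hp F hinj hline
end

section
/- Let n ≥ 2 and let F : ℝⁿ → ℝⁿ be a bijection satisfying F(x) = Σᵢ fᵢ(xᵢ)eᵢ for every x = (x₁, ..., xₙ) ∈ ℝⁿ, where each fᵢ : ℝ → ℝ is a bijection with fᵢ(0) = 0 and fᵢ(1) = 1. Assume that F maps any line through the origin into a line. Then f₁ = f₂ = ⋯ = fₙ, and f₁ is multiplicative. -/
/-- **Lemma (diagonal bijections preserving lines through the origin).**
Let `n ≥ 2` and let `F : ℝⁿ → ℝⁿ` be a bijection of the form `F x = ∑ fᵢ (xᵢ) • eᵢ`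
where each `fᵢ : ℝ → ℝ` is a bijection with `fᵢ 0 = 0` and `fᵢ 1 = 1`. If `F` maps
every line through the origin into a line, then all the `fᵢ` coincide and they are
multiplicative. -/
theorem diagonal_linesThruOrigin_multiplicative
    {n : ℕ} (hn : 2 ≤ n)
    (F : (Fin n → ℝ) → (Fin n → ℝ)) (hbij : Function.Bijective F)
    (f : Fin n → ℝ → ℝ)
    (hf : ∀ i, Function.Bijective (f i) ∧ f i 0 = 0 ∧ f i 1 = 1)
    (hF : ∀ x : Fin n → ℝ, F x = ∑ i, f i (x i) • (Pi.single i 1 : Fin n → ℝ))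
    (hline : ∀ b : Fin n → ℝ, b ≠ 0 →
      ∃ l : Set (Fin n → ℝ), IsLine l ∧ F '' lineThru 0 b ⊆ l) :
    (∀ i j : Fin n, f i = f j) ∧
    ∀ (i : Fin n) (a b : ℝ), f i (a * b) = f i a * f i b := by
  have hFa : ∀ x k, F x k = f k (x k) := by
    intro x k
    rw [hF, Finset.sum_apply]
    simp [Pi.single_apply]
  have key : ∀ i j : Fin n, i ≠ j → ∀ t c : ℝ, f j (t * c) = f i t * f j c := by
    intro i j hij t c
    let v : Fin n → ℝ := fun k => if k = i then 1 else if k = j then c else 0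
    have vi : v i = 1 := by simp [v]
    have vj : v j = c := by simp [v, hij.symm]
    have hv : v ≠ 0 := by
      intro h
      rw [h] at vi
      simp at vi
    obtain ⟨l, ⟨a, b, -, rfl⟩, hl⟩ := hline v hv
    have hs : ∀ s : ℝ, ∃ r : ℝ, f i s = a i + r * b i ∧ f j (s * c) = a j + r * b j := by
      intro s
      obtain ⟨r, hr⟩ := hl ⟨s • v, ⟨s, by simp⟩, rfl⟩
      refine ⟨r, ?_, ?_⟩
      · have := congrFun hr i
        rw [hFa] at this
        simpa [vi] using this
      · have := congrFun hr j
        rw [hFa] at this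
        simpa [vj] using this
    obtain ⟨r0, h0, h0'⟩ := hs 0
    obtain ⟨r1, h1, h1'⟩ := hs 1
    obtain ⟨r2, h2, h2'⟩ := hs t
    rw [(hf i).2.1] at h0
    rw [zero_mul, (hf j).2.1] at h0'
    rw [(hf i).2.2] at h1
    rw [one_mul] at h1'
    have e0 : a i = - (r0 * b i) := by linarith
    have e0' : a j = - (r0 * b j) := by linarith
    rw [h2, h1', h2', e0, e0']
    rw [e0] at h1
    linear_combination (r2 - r0) * b j * h1
  have heq : ∀ i j : Fin n, f i = f j := by
    intro i j
    by_cases hij : i = j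
    · rw [hij]
    · funext t
      have := key i j hij t 1
      rw [mul_one, (hf j).2.2, mul_one] at this
      exact this.symm
  refine ⟨heq, fun i a b => ?_⟩
  haveI : Nontrivial (Fin n) := Fin.nontrivial_iff_two_le.mpr hn
  obtain ⟨j, hj⟩ := exists_ne i
  have := key i j hj.symm a b
  rwa [heq j i] at this
end

section
/- Let f : ℝ → ℝ be a multiplicative injection, and assume that the function g defined by g(x) = f(x + 1) − 1 is also multiplicative. Then f(x) = x for every x ∈ ℝ. -/
/-- **Lemma (two multiplicative functions force the identity).**
If `f : ℝ → ℝ` is an injective multiplicative function such that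
`g x = f (x + 1) - 1` is also multiplicative, then `f` is the identity. -/
theorem eq_id_of_multiplicative_shift
    (f : ℝ → ℝ) (hinj : Function.Injective f)
    (hmul : ∀ a b : ℝ, f (a * b) = f a * f b)
    (g : ℝ → ℝ) (hg : ∀ x : ℝ, g x = f (x + 1) - 1)
    (hgmul : ∀ a b : ℝ, g (a * b) = g a * g b) :
    ∀ x : ℝ, f x = x := by
  have h01 : f 0 ≠ f 1 := fun h => zero_ne_one (hinj h)
  have h0 : f 0 = 0 := by
    have h := hmul 0 1
    have h' := hmul 0 0
    have h2 := hmul 0 (-1)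
    have h3 : f (-1) ≠ f 1 := fun h => by have := hinj h; norm_num at this
    simp only [zero_mul] at h h' h2
    by_contra hne
    have e1 : f 1 = 1 := mul_left_cancel₀ hne (by linarith)
    have e2 : f (-1) = 1 := mul_left_cancel₀ hne (by linarith)
    exact h3 (e2.trans e1.symm)
  have h1 : f 1 = 1 := by
    have h := hmul 1 1
    rw [mul_one] at h
    have hne : f 1 ≠ 0 := fun e => h01 (h0.trans e.symm)
    exact mul_left_cancel₀ hne (by linarith)
  have hm1 : f (-1) = -1 := by
    have h := hmul (-1) (-1)
    have h3 : f (-1) ≠ f 1 := fun h => by have := hinj h; norm_num at this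
    norm_num [h1] at h
    rw [h1] at h3
    rcases mul_self_eq_one_iff.1 h.symm with h | h
    · exact absurd h h3
    · exact h
  have hodd : ∀ x, f (-x) = - f x := fun x => by
    have := hmul (-1) x
    rw [hm1] at this
    simpa using this
  have hgm1 : g (-1) = -1 := by rw [hg]; norm_num [h0]
  have hsum : ∀ x, f (1 + x) + f (1 - x) = 2 := fun x => by
    have h := hgmul (-1) x
    rw [hgm1, hg, hg] at h
    rw [show (-1) * x + 1 = 1 - x by ring, show x + 1 = 1 + x by ring] at h
    linarith
  have h2 : f 2 = 2 := by
    have h := hsum 1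
    norm_num [h0] at h
    exact h
  have hJ : ∀ a b, f (a + b) + f (a - b) = 2 * f a := fun a b => by
    by_cases ha : a = 0
    · subst ha
      simp [hodd, h0]
    · have h := hsum (b / a)
      have e1 : a + b = a * (1 + b / a) := by field_simp
      have e2 : a - b = a * (1 - b / a) := by field_simp
      rw [e1, e2, hmul, hmul, ← mul_add, h]
      ring
  have hadd : ∀ u v, f (u + v) = f u + f v := fun u v => by
    have h := hJ ((u + v) / 2) ((u - v) / 2)
    have h' := hmul 2 ((u + v) / 2)
    rw [h2, show 2 * ((u + v) / 2) = u + v by ring] at h'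
    rw [show (u + v) / 2 + (u - v) / 2 = u by ring,
      show (u + v) / 2 - (u - v) / 2 = v by ring] at h
    linarith
  let F : ℝ →+* ℝ :=
    { toFun := f, map_one' := h1, map_mul' := hmul, map_zero' := h0, map_add' := hadd }
  intro x
  have hF : F = RingHom.id ℝ := Subsingleton.elim _ _
  exact congrArg (fun φ : ℝ →+* ℝ => φ x) hF
end

section
/- Let f : ℝ → ℝ be a multiplicative injection (note that then f(2) ≠ 1, since f(1) = 1 and f is injective). Assume that the function g defined by g(x) = (f(x + 1) − 1)/(f(2) − 1) is also multiplicative. Then f(x) = x for every x ∈ ℝ. -/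
/-- **Lemma (normalized shift of a multiplicative injection).**
Let `f : ℝ → ℝ` be an injective multiplicative function (so `f 1 = 1` and `f 2 ≠ 1`).
If `g x = (f (x + 1) - 1) / (f 2 - 1)` is also multiplicative, then `f` is the
identity. -/
theorem eq_id_of_multiplicative_normalized_shift
    (f : ℝ → ℝ) (hinj : Function.Injective f)
    (hmul : ∀ a b : ℝ, f (a * b) = f a * f b)
    (g : ℝ → ℝ) (hg : ∀ x : ℝ, g x = (f (x + 1) - 1) / (f 2 - 1))
    (hgmul : ∀ a b : ℝ, g (a * b) = g a * g b) :
    ∀ x : ℝ, f x = x := by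
  have h1 : f 1 = 1 := by
    have h := hmul 1 1
    rw [mul_one] at h
    by_contra hne
    have h0 : f 1 = 0 := by
      have : f 1 * (f 1 - 1) = 0 := by linarith
      rcases mul_eq_zero.mp this with h | h
      · exact h
      · exact absurd (by linarith) hne
    have h2 := hmul 2 1
    rw [mul_one, h0, mul_zero] at h2
    have := hinj (h2.trans h0.symm)
    norm_num at this
  have h21 : f 2 ≠ 1 := by
    intro h
    have := hinj (h.trans h1.symm)
    norm_num at this
  have h0 : f 0 = 0 := by
    have h := hmul 0 2
    rw [zero_mul] at h
    have : f 0 * (f 2 - 1) = 0 := by linarith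
    rcases mul_eq_zero.mp this with h | h
    · exact h
    · exact absurd (by linarith) h21
  have hd : f 2 - 1 ≠ 0 := sub_ne_zero.mpr h21
  have hm1 : f (-1) = -1 := by
    have h := hmul (-1) (-1)
    rw [show (-1 : ℝ) * (-1) = 1 by norm_num, h1] at h
    rcases mul_self_eq_one_iff.mp h.symm with h | h
    · have := hinj (h.trans h1.symm)
      norm_num at this
    · exact h
  have hodd : ∀ x, f (-x) = - f x := by
    intro x
    have h := hmul (-1) x
    rw [hm1] at h
    simpa using h
  have hg1 : g 1 = 1 := by
    rw [hg, show (1 : ℝ) + 1 = 2 by norm_num]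
    exact div_self hd
  have hf2 : f 2 = 2 := by
    have h := hgmul (-1) (-1)
    rw [show (-1 : ℝ) * (-1) = 1 by norm_num, hg1] at h
    have hgm : g (-1) * (f 2 - 1) = -1 := by
      rw [hg, show (-1 : ℝ) + 1 = 0 by norm_num, h0, div_mul_cancel₀ _ hd]
      norm_num
    rcases mul_self_eq_one_iff.mp h.symm with h | h
    · rw [h] at hgm
      have h20 : f 2 = 0 := by linarith
      have := hinj (h20.trans h0.symm)
      norm_num at this
    · rw [h] at hgm
      linarith
  have hg' : ∀ x, g x = f (x + 1) - 1 := by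
    intro x
    rw [hg, hf2]
    norm_num
  have hshift : ∀ x, f (x + 2) = f x + 2 := by
    intro x
    have h := hgmul (-1) (x + 1)
    simp only [hg'] at h
    rw [show (-1 : ℝ) + 1 = 0 by norm_num, h0, show -1 * (x + 1) + 1 = -x by ring,
      show x + 1 + 1 = x + 2 by ring, hodd] at h
    linarith
  have hadd : ∀ x y, f (x + y) = f x + f y := by
    intro x y
    by_cases hy : y = 0
    · simp [hy, h0]
    · have e1 : x + y = (y / 2) * (x / (y / 2) + 2) := by field_simp
      have e2 : x = (y / 2) * (x / (y / 2)) := by field_simp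
      have e3 : f y = f (y / 2) * 2 := by
        have h := hmul (y / 2) 2
        rwa [hf2, div_mul_cancel₀ y (two_ne_zero : (2 : ℝ) ≠ 0)] at h
      have e4 : f x = f (y / 2) * f (x / (y / 2)) := by
        rw [← hmul, ← e2]
      rw [e1, hmul, hshift, e3, e4]
      ring
  let F : ℝ →+* ℝ :=
    { toFun := f, map_one' := h1, map_mul' := hmul, map_zero' := h0, map_add' := hadd }
  intro x
  have hF : F = RingHom.id ℝ := Subsingleton.elim _ _
  exact congrArg (fun G : ℝ →+* ℝ => G x) hF
end

section
/- Let n ≥ 2 and let F : ℝⁿ → ℝⁿ be an additive bijection. Assume that F maps any line passing through a given point x₀ ∈ ℝⁿ into a line. Then F is affine; equivalently, since F is additive with F(0) = 0, F is ℝ-linear. -/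
/-- **Lemma (an additive bijection preserving lines through one point is linear).**
Let `n ≥ 2` and let `F : ℝⁿ → ℝⁿ` be an additive bijection that maps every line
through a given point `x₀` into a line. Then `F` is `ℝ`-linear (equivalently, affine,
since `F 0 = 0`). -/
theorem linear_of_additive_linesThruPoint
    {n : ℕ} (hn : 2 ≤ n)
    (F : (Fin n → ℝ) → (Fin n → ℝ)) (hbij : Function.Bijective F)
    (hadd : ∀ x y : Fin n → ℝ, F (x + y) = F x + F y)
    (x₀ : Fin n → ℝ)
    (hline : ∀ b : Fin n → ℝ, b ≠ 0 →
      ∃ l : Set (Fin n → ℝ), IsLine l ∧ F '' lineThru x₀ b ⊆ l) :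
    IsLinearMap ℝ F := by
  have h0 : F 0 = 0 := by
    have h := hadd 0 0
    rw [add_zero] at h
    exact left_eq_add.mp h
  have hne : ∀ b, b ≠ 0 → F b ≠ 0 := fun b hb h => hb (hbij.1 (h.trans h0.symm))
  have hex : ∀ b : Fin n → ℝ, ∀ t : ℝ, ∃ c : ℝ, F (t • b) = c • F b := by
    intro b t
    by_cases hb : b = 0
    · exact ⟨0, by simp [hb, h0]⟩
    obtain ⟨l, ⟨a, c, hc, rfl⟩, hl⟩ := hline b hb
    have key : ∀ t : ℝ, ∃ s : ℝ, F x₀ + F (t • b) = a + s • c := by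
      intro t
      obtain ⟨s, hs⟩ := hl ⟨x₀ + t • b, ⟨t, rfl⟩, rfl⟩
      exact ⟨s, by rw [← hadd, hs]⟩
    obtain ⟨s0, hs0⟩ := key 0
    obtain ⟨s1, hs1⟩ := key 1
    obtain ⟨st, hst⟩ := key t
    rw [zero_smul, h0, add_zero] at hs0
    rw [one_smul] at hs1
    have e1 : F b = (s1 - s0) • c := by
      rw [hs0] at hs1
      rw [sub_smul]
      linear_combination hs1
    have et : F (t • b) = (st - s0) • c := by
      rw [hs0] at hst
      rw [sub_smul]
      linear_combination hst
    have hd : s1 - s0 ≠ 0 := by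
      intro h
      rw [h, zero_smul] at e1
      exact hne b hb e1
    refine ⟨(st - s0) / (s1 - s0), ?_⟩
    rw [et, e1, smul_smul, div_mul_cancel₀ _ hd]
  choose g hg using hex
  have hind : ∀ b w : Fin n → ℝ, LinearIndependent ℝ ![F b, F w] → ∀ t, g b t = g w t := by
    intro b w hli t
    rw [LinearIndependent.pair_iff] at hli
    have h1 : (g b t - g (b + w) t) • F b + (g w t - g (b + w) t) • F w = 0 := by
      have h2 := hg (b + w) t
      rw [smul_add, hadd, hadd, hg b, hg w, smul_add] at h2
      rw [sub_smul, sub_smul]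
      linear_combination h2
    obtain ⟨h3, h4⟩ := hli _ _ h1
    linarith
  have hfr : 1 < Module.finrank ℝ (Fin n → ℝ) := by simp; omega
  have hw : ∀ b, b ≠ 0 → ∃ w, LinearIndependent ℝ ![F b, F w] := by
    intro b hb
    obtain ⟨y, hy⟩ := exists_linearIndependent_pair_of_one_lt_finrank hfr (hne b hb)
    obtain ⟨w, rfl⟩ := hbij.2 y
    exact ⟨w, hy⟩
  have hall : ∀ b u, b ≠ 0 → u ≠ 0 → ∀ t, g b t = g u t := by
    intro b u hb hu t
    by_cases hli : LinearIndependent ℝ ![F u, F b]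
    · exact (hind _ _ hli t).symm
    rw [LinearIndependent.pair_iff' (hne u hu)] at hli
    push Not at hli
    obtain ⟨c, hc⟩ := hli
    have hc0 : c ≠ 0 := by
      rintro rfl
      rw [zero_smul] at hc
      exact hne b hb hc.symm
    obtain ⟨w, hw⟩ := hw u hu
    rw [hind u w hw t]
    apply hind
    rw [LinearIndependent.pair_iff] at hw ⊢
    intro p q hpq
    rw [← hc, smul_smul] at hpq
    obtain ⟨h1, h2⟩ := hw _ _ hpq
    exact ⟨(mul_eq_zero.mp h1).resolve_right hc0, h2⟩
  have : Nontrivial (Fin n → ℝ) := Module.nontrivial_of_finrank_pos (R := ℝ) (by omega)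
  obtain ⟨u, hu⟩ := exists_ne (0 : Fin n → ℝ)
  have hF : ∀ t b, F (t • b) = g u t • F b := by
    intro t b
    by_cases hb : b = 0
    · simp [hb, h0]
    rw [hg, hall b u hb hu]
  have inj : ∀ p q : ℝ, p • F u = q • F u → p = q := fun p q h =>
    smul_left_injective ℝ (hne u hu) h
  let φ : ℝ →+* ℝ :=
    { toFun := g u
      map_one' := inj _ _ (by rw [← hF]; simp)
      map_mul' := fun x y => inj _ _ (by rw [← hF, mul_smul, hF, hF, smul_smul])
      map_zero' := inj _ _ (by rw [← hF]; simp [h0])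
      map_add' := fun x y => inj _ _ (by rw [← hF, add_smul, hadd, hF, hF, add_smul]) }
  have hφ : ∀ t, g u t = t := by
    intro t
    have h : φ = RingHom.id ℝ := Subsingleton.elim _ _
    exact congrArg (fun f : ℝ →+* ℝ => f t) h
  exact ⟨hadd, fun t b => by rw [hF, hφ]⟩
end
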